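/- arXiv:2203.08767 — 10 statements merged into one kernel-verified Lean document; each statement's English description precedes it below -/
import Mathlib

section
/- Let 0 < R ≤ Q be real numbers and let A = {p ∈ ℝ² : R ≤ ‖p‖ ≤ Q} be the closed annulus in the Euclidean plane. Define H : A × [0,1] → ℝ² by H(p,t) = (((1−t)·‖p‖ + t·R)/‖p‖) · p. Then: (i) H is continuous; (ii) H(p,t) ∈ A for all p ∈ A and t ∈ [0,1]; (iii) H(p,0) = p for all p ∈ A; (iv) ‖H(p,1)‖ = R for all p ∈ A; (v) H(p,t) = p for all t ∈ [0,1] whenever ‖p‖ = R; and (vi) for every fixed t ∈ [0,1], the map p ↦ H(p,t) is 1-Lipschitz on A, i.e. ‖H(p,t) − H(q,t)‖ ≤ ‖p − q‖ for all p, q ∈ A. In other words, the inner circle of radius R is a Lipschitz deformation retract of the annulus A. -/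
open Set

/-- The inner circle of radius `R` is a Lipschitz deformation retract of the
closed annulus `A = {p : ℝ² | R ≤ ‖p‖ ≤ Q}`, via the radial homotopy
`H (p, t) = (((1 - t) * ‖p‖ + t * R) / ‖p‖) • p`. -/
theorem annulus_lipschitz_deformation_retract
    (R Q : ℝ) (hR : 0 < R) (hRQ : R ≤ Q)
    (A : Set (EuclideanSpace ℝ (Fin 2)))
    (hA : A = {p : EuclideanSpace ℝ (Fin 2) | R ≤ ‖p‖ ∧ ‖p‖ ≤ Q})
    (H : EuclideanSpace ℝ (Fin 2) → ℝ → EuclideanSpace ℝ (Fin 2))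
    (hH : ∀ p t, H p t = (((1 - t) * ‖p‖ + t * R) / ‖p‖) • p) :
    -- (i) H is continuous (on A × [0,1])
    ContinuousOn (fun q : EuclideanSpace ℝ (Fin 2) × ℝ => H q.1 q.2) (A ×ˢ Icc 0 1) ∧
    -- (ii) H maps into A
    (∀ p ∈ A, ∀ t ∈ Icc (0:ℝ) 1, H p t ∈ A) ∧
    -- (iii) H(p,0) = p
    (∀ p ∈ A, H p 0 = p) ∧
    -- (iv) ‖H(p,1)‖ = R
    (∀ p ∈ A, ‖H p 1‖ = R) ∧
    -- (v) H is relative to the inner circle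
    (∀ p ∈ A, ‖p‖ = R → ∀ t ∈ Icc (0:ℝ) 1, H p t = p) ∧
    -- (vi) each time slice is 1-Lipschitz on A
    (∀ t ∈ Icc (0:ℝ) 1, ∀ p ∈ A, ∀ q ∈ A, ‖H p t - H q t‖ ≤ ‖p - q‖) := by
  subst hA
  have hpos : ∀ p : EuclideanSpace ℝ (Fin 2), R ≤ ‖p‖ → 0 < ‖p‖ := fun p hp => hR.trans_le hp
  have hnorm : ∀ p : EuclideanSpace ℝ (Fin 2), R ≤ ‖p‖ → ∀ t ∈ Icc (0:ℝ) 1,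
      ‖H p t‖ = (1 - t) * ‖p‖ + t * R := by
    intro p hp t ht
    have h0 := hpos p hp
    have h1 : 0 ≤ (1 - t) * ‖p‖ + t * R :=
      add_nonneg (mul_nonneg (by linarith [ht.2]) h0.le) (mul_nonneg ht.1 hR.le)
    rw [hH, norm_smul, Real.norm_of_nonneg (div_nonneg h1 h0.le), div_mul_cancel₀ _ h0.ne']
  refine ⟨?_, ?_, ?_, ?_, ?_, ?_⟩
  · simp only [hH]
    rintro ⟨p, t⟩ ⟨hp, -⟩
    have h0 : ‖p‖ ≠ 0 := (hpos p hp.1).ne'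
    apply ContinuousAt.continuousWithinAt
    have h1 : ContinuousAt (fun q : EuclideanSpace ℝ (Fin 2) × ℝ =>
        ((1 - q.2) * ‖q.1‖ + q.2 * R) / ‖q.1‖) (p, t) :=
      ContinuousAt.div₀ (f := fun q : EuclideanSpace ℝ (Fin 2) × ℝ =>
        (1 - q.2) * ‖q.1‖ + q.2 * R) (g := fun q : EuclideanSpace ℝ (Fin 2) × ℝ => ‖q.1‖)
        (by fun_prop) (by fun_prop) h0
    exact h1.smul continuousAt_fst
  · rintro p ⟨hp1, hp2⟩ t ht
    have h := hnorm p hp1 t ht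
    obtain ⟨h0, h1⟩ := ht
    constructor
    · rw [h]; nlinarith
    · rw [h]; nlinarith
  · rintro p ⟨hp, -⟩
    rw [hH]
    simp [(hpos p hp).ne']
  · rintro p ⟨hp, -⟩
    rw [hnorm p hp 1 (by simp)]
    ring
  · rintro p ⟨hp, -⟩ he t -
    have h0 := (hpos p hp).ne'
    have h1 : ((1 - t) * ‖p‖ + t * R) / ‖p‖ = 1 := by
      rw [← he]; field_simp; ring
    rw [hH, h1, one_smul]
  · rintro t ⟨ht0, ht1⟩ p ⟨hp, -⟩ q ⟨hq, -⟩
    have ha := hpos p hp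
    have hb := hpos q hq
    have key : ‖(R / ‖p‖) • p - (R / ‖q‖) • q‖ ≤ ‖p - q‖ := by
      refine (sq_le_sq₀ (norm_nonneg _) (norm_nonneg _)).1 ?_
      rw [norm_sub_sq_real, norm_sub_sq_real, norm_smul, norm_smul, real_inner_smul_left,
        real_inner_smul_right, Real.norm_of_nonneg (div_nonneg hR.le ha.le),
        Real.norm_of_nonneg (div_nonneg hR.le hb.le), div_mul_cancel₀ _ ha.ne',
        div_mul_cancel₀ _ hb.ne']
      have hs := real_inner_le_norm p q
      obtain ⟨c, hc⟩ : ∃ c, inner ℝ p q = ‖p‖ * ‖q‖ * c :=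
        ⟨inner ℝ p q / (‖p‖ * ‖q‖), by field_simp⟩
      rw [hc] at hs ⊢
      have hc1 : c ≤ 1 := by
        by_contra hcon
        push Not at hcon
        nlinarith [mul_pos ha hb]
      have e : R / ‖p‖ * (R / ‖q‖ * (‖p‖ * ‖q‖ * c)) = R ^ 2 * c := by
        field_simp
      rw [e]
      have h3 : R * R ≤ ‖p‖ * ‖q‖ := mul_le_mul hp hq hR.le ha.le
      nlinarith [sq_nonneg (‖p‖ - ‖q‖), mul_nonneg (sub_nonneg.2 h3) (sub_nonneg.2 hc1)]
    have dec : ∀ x : EuclideanSpace ℝ (Fin 2), 0 < ‖x‖ →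
        H x t = (1 - t) • x + t • ((R / ‖x‖) • x) := by
      intro x hx
      rw [hH, smul_smul, ← add_smul]
      congr 1
      field_simp
    have e : H p t - H q t
        = (1 - t) • (p - q) + t • ((R / ‖p‖) • p - (R / ‖q‖) • q) := by
      rw [dec p ha, dec q hb, smul_sub, smul_sub]
      abel
    rw [e]
    refine (norm_add_le _ _).trans ?_
    rw [norm_smul, norm_smul, Real.norm_of_nonneg ht0, Real.norm_of_nonneg (sub_nonneg.2 ht1)]
    nlinarith [mul_le_mul_of_nonneg_left key ht0]
end

section
/- Fix R > 0 and s > 0, and define α : (0,∞) → ℝ by α(c) = vol(B(O,R) ∩ B(p_c,s)) and y : (0,∞) → ℝ by letting y(c) be the maximum of the second coordinates of points of C(O,R) ∩ C(p_c,s) if this intersection is nonempty, and y(c) = 0 otherwise. Then α is continuously differentiable on (0,∞): for every c > 0, α has derivative −2·y(c) at c, and y is continuous on (0,∞). -/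
open Set MeasureTheory Metric
open scoped Classical

/-- The point `(c, 0)` in the Euclidean plane. -/
noncomputable def pc (c : ℝ) : EuclideanSpace ℝ (Fin 2) :=
  (WithLp.equiv 2 (Fin 2 → ℝ)).symm ![c, 0]

namespace AlphaAux

/-- slice length -/
noncomputable def len (R s c t : ℝ) : ℝ :=
  max (min (√(R^2-t^2)) (c + √(s^2-t^2)) - max (-√(R^2-t^2)) (c - √(s^2-t^2))) 0

lemma pc_zero (c : ℝ) : pc c 0 = c := by simp [pc]
lemma pc_one (c : ℝ) : pc c 1 = 0 := by simp [pc]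

lemma dist_lt (c r : ℝ) (hr : 0 < r) (p : EuclideanSpace ℝ (Fin 2)) :
    dist p (pc c) < r ↔ (p 0 - c)^2 + (p 1)^2 < r^2 := by
  rw [EuclideanSpace.dist_eq, Real.sqrt_lt' hr]
  simp [Fin.sum_univ_two, pc_zero, pc_one, Real.dist_eq, sq_abs]

lemma dist_eq' (c r : ℝ) (hr : 0 < r) (p : EuclideanSpace ℝ (Fin 2)) :
    dist p (pc c) = r ↔ (p 0 - c)^2 + (p 1)^2 = r^2 := by
  rw [EuclideanSpace.dist_eq, Real.sqrt_eq_iff_eq_sq (by positivity) hr.le]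
  simp [Fin.sum_univ_two, pc_zero, pc_one, Real.dist_eq, sq_abs]

lemma pc_origin : pc 0 = 0 := by
  ext i; fin_cases i <;> simp [pc]

lemma mem_iff (R s c : ℝ) (hR : 0 < R) (hs : 0 < s) (p : EuclideanSpace ℝ (Fin 2)) :
    p ∈ sphere (0 : EuclideanSpace ℝ (Fin 2)) R ∩ sphere (pc c) s ↔
      (p 0)^2 + (p 1)^2 = R^2 ∧ (p 0 - c)^2 + (p 1)^2 = s^2 := by
  rw [mem_inter_iff, mem_sphere, mem_sphere, dist_eq' c s hs, ← pc_origin, dist_eq' 0 R hR, sub_zero]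

lemma y_formula (R s c : ℝ) (hR : 0 < R) (hs : 0 < s) (hc : 0 < c) :
    (if (sphere (0 : EuclideanSpace ℝ (Fin 2)) R ∩ sphere (pc c) s).Nonempty then
        sSup ((fun p : EuclideanSpace ℝ (Fin 2) => p 1) ''
          (sphere (0 : EuclideanSpace ℝ (Fin 2)) R ∩ sphere (pc c) s))
      else 0) = √(R^2 - ((c^2+R^2-s^2)/(2*c))^2) := by
  set x := (c^2+R^2-s^2)/(2*c) with hx
  have hxc : 2*c*x = c^2+R^2-s^2 := by rw [hx]; field_simp
  have key : ∀ p : EuclideanSpace ℝ (Fin 2),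
      p ∈ sphere (0 : EuclideanSpace ℝ (Fin 2)) R ∩ sphere (pc c) s →
      (p 1)^2 = R^2 - x^2 := by
    intro p hp
    rw [mem_iff R s c hR hs] at hp
    obtain ⟨h1, h2⟩ := hp
    have : p 0 = x := by
      have : 2*c*(p 0) = 2*c*x := by rw [hxc]; linarith
      exact mul_left_cancel₀ (by positivity) this
    rw [← this]; linarith
  split_ifs with h
  · obtain ⟨p, hp⟩ := h
    have hq : 0 ≤ R^2 - x^2 := by rw [← key p hp]; positivity
    apply IsGreatest.csSup_eq
    constructor
    · refine ⟨!₂[x, √(R^2-x^2)], ?_, by simp⟩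
      rw [mem_iff R s c hR hs]
      simp only [Matrix.cons_val_zero, Matrix.cons_val_one]
      rw [Real.sq_sqrt hq]
      constructor <;> linarith
    · rintro _ ⟨p, hp, rfl⟩
      exact Real.le_sqrt_of_sq_le (key p hp).le
  · symm
    apply Real.sqrt_eq_zero_of_nonpos
    by_contra! hq
    apply h
    refine ⟨!₂[x, √(R^2-x^2)], ?_⟩
    rw [mem_iff R s c hR hs]
    simp only [Matrix.cons_val_zero, Matrix.cons_val_one]
    rw [Real.sq_sqrt hq.le]
    constructor <;> linarith

lemma len_cont (R s c : ℝ) : Continuous (len R s c) := by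
  unfold len; fun_prop

lemma alpha_formula (R s c : ℝ) (hR : 0 < R) (hs : 0 < s) :
    (volume (ball (0 : EuclideanSpace ℝ (Fin 2)) R ∩ ball (pc c) s)).toReal
      = ∫ t, len R s c t := by
  let S : Set (ℝ × ℝ) := {z | z.1^2 + z.2^2 < R^2 ∧ (z.1-c)^2 + z.2^2 < s^2}
  have hS : MeasurableSet S := by
    apply IsOpen.measurableSet
    have o1 : IsOpen {z : ℝ × ℝ | z.1^2 + z.2^2 < R^2} := isOpen_lt (by fun_prop) (by fun_prop)
    have o2 : IsOpen {z : ℝ × ℝ | (z.1-c)^2 + z.2^2 < s^2} := isOpen_lt (by fun_prop) (by fun_prop)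
    exact o1.inter o2
  have h1 := (volume_preserving_finTwoArrow ℝ).comp (PiLp.volume_preserving_ofLp (Fin 2))
  have h2 := h1.measure_preimage hS.nullMeasurableSet
  have h3 : (ball (0 : EuclideanSpace ℝ (Fin 2)) R ∩ ball (pc c) s) =
     (⇑MeasurableEquiv.finTwoArrow ∘ WithLp.ofLp) ⁻¹' S := by
    ext p
    rw [mem_inter_iff, mem_ball, mem_ball, dist_lt c s hs, ← pc_origin, dist_lt 0 R hR, sub_zero]
    rfl
  rw [h3, h2, integral_eq_lintegral_of_nonneg_ae (f := len R s c) (Filter.Eventually.of_forall fun t => le_max_right _ _)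
    (len_cont R s c).aestronglyMeasurable, Measure.volume_eq_prod, Measure.prod_apply_symm hS]
  congr 1
  apply lintegral_congr
  intro t
  have : (fun x => (x, t)) ⁻¹' S = Ioo (max (-√(R^2-t^2)) (c - √(s^2-t^2)))
      (min (√(R^2-t^2)) (c + √(s^2-t^2))) := by
    ext x
    have e1 : x^2 + t^2 < R^2 ↔ x^2 < R^2 - t^2 := by constructor <;> intro h <;> linarith
    have e2 : (x-c)^2 + t^2 < s^2 ↔ (x-c)^2 < s^2 - t^2 := by constructor <;> intro h <;> linarith
    simp only [S, mem_preimage, mem_setOf_eq, mem_Ioo, max_lt_iff, lt_min_iff, e1, e2, Real.sq_lt]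
    constructor
    · rintro ⟨⟨_, _⟩, _, _⟩; refine ⟨⟨?_, ?_⟩, ?_, ?_⟩ <;> linarith
    · rintro ⟨⟨_, _⟩, _, _⟩; refine ⟨⟨?_, ?_⟩, ?_, ?_⟩ <;> linarith
  rw [this, Real.volume_Ioo, len]
  simp [ENNReal.ofReal_max]

lemma len_lip (R s t c d : ℝ) : |len R s c t - len R s d t| ≤ 2 * |c - d| := by
  unfold len
  generalize √(R^2-t^2) = a
  generalize √(s^2-t^2) = b
  have h1 := abs_min_sub_min_le_max a (c+b) a (d+b)
  have h2 := abs_max_sub_max_le_max (-a) (c-b) (-a) (d-b)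
  have h3 := abs_max_sub_max_le_abs (min a (c+b) - max (-a) (c-b)) (min a (d+b) - max (-a) (d-b)) 0
  have e1 : c + b - (d + b) = c - d := by ring
  have e2 : c - b - (d - b) = c - d := by ring
  rw [e1, sub_self, abs_zero, max_eq_right (abs_nonneg (c-d))] at h1
  rw [e2, sub_self, abs_zero, max_eq_right (abs_nonneg (c-d))] at h2
  refine h3.trans ?_
  rw [abs_le] at *
  constructor <;> linarith

lemma len_zero (R s c t : ℝ) (h : R^2 ≤ t^2 ∨ s^2 ≤ t^2) : len R s c t = 0 := by
  unfold len
  apply max_eq_right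
  rcases h with h | h
  · have : √(R^2-t^2) = 0 := Real.sqrt_eq_zero_of_nonpos (by linarith)
    rw [this]
    have := min_le_left (0:ℝ) (c + √(s^2-t^2))
    have := le_max_left (-0:ℝ) (c - √(s^2-t^2))
    linarith
  · have : √(s^2-t^2) = 0 := Real.sqrt_eq_zero_of_nonpos (by linarith)
    rw [this]
    have := min_le_right (√(R^2-t^2)) (c + 0)
    have := le_max_right (-√(R^2-t^2)) (c - 0)
    linarith

lemma len_deriv (R s c t : ℝ) (hc : 0 < c)
    (hne : t^2 ≠ R^2 - ((c^2+R^2-s^2)/(2*c))^2) :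
    HasDerivAt (fun c => len R s c t)
      (if t^2 < R^2 - ((c^2+R^2-s^2)/(2*c))^2 then -1 else 0) c := by
  set x := (c^2+R^2-s^2)/(2*c) with hx
  have hxc : 2*c*x = c^2+R^2-s^2 := by rw [hx]; field_simp
  by_cases hz : R^2 ≤ t^2 ∨ s^2 ≤ t^2
  · have : (fun c => len R s c t) = fun _ => 0 := by
      funext c; exact len_zero R s c t hz
    rw [this, if_neg]
    · exact hasDerivAt_const _ _
    · rcases hz with h | h
      · nlinarith [sq_nonneg x]
      · nlinarith [sq_nonneg (x-c)]
  push Not at hz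
  obtain ⟨hz1, hz2⟩ := hz
  have ha : 0 < √(R^2-t^2) := Real.sqrt_pos.2 (by linarith)
  have hb : 0 < √(s^2-t^2) := Real.sqrt_pos.2 (by linarith)
  have ha2 : √(R^2-t^2)^2 = R^2-t^2 := Real.sq_sqrt (by linarith)
  have hb2 : √(s^2-t^2)^2 = s^2-t^2 := Real.sq_sqrt (by linarith)
  unfold len
  generalize √(R^2-t^2) = a at *
  generalize √(s^2-t^2) = b at *
  have hxab : 2*c*x = c^2+a^2-b^2 := by linarith
  have hfac : 4*c^2*(a^2 - x^2) = ((a+c)^2-b^2)*(b^2-(a-c)^2) := by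
    have : 4*c^2*(a^2 - x^2) = 4*c^2*a^2 - (2*c*x)^2 := by ring
    rw [this, hxab]; ring
  have hc2 : 0 < 4*c^2 := by positivity
  have ev1 : ∀ u v : ℝ, c < u → (∀ᶠ d in nhds c, d < u) := fun u v h => gt_mem_nhds h
  split_ifs with hlt
  · have hp : 0 < ((a+c)-b)*(b-(a-c))*((b+(a-c))*((a+c)+b)) := by
      have : 0 < 4*c^2*(a^2 - x^2) := mul_pos hc2 (by linarith)
      rw [hfac] at this; linarith
    have h1 : c < a + b := by
      by_contra! h
      have : ((a+c)-b) > 0 := by linarith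
      have : (b-(a-c)) > 0 := by linarith
      have : (b+(a-c)) ≤ 0 := by linarith
      nlinarith [mul_pos ‹((a+c)-b) > 0› ‹(b-(a-c)) > 0›, mul_nonneg (neg_nonneg.2 this) (by linarith : 0 ≤ (a+c)+b), mul_nonneg (mul_pos ‹((a+c)-b) > 0› ‹(b-(a-c)) > 0›).le (mul_nonneg (neg_nonneg.2 this) (by linarith : 0 ≤ (a+c)+b))]
    have hp2 : 0 < ((a+c)-b)*(b-(a-c)) :=
      (pos_iff_pos_of_mul_pos hp).2 (mul_pos (by linarith) (by linarith))
    have h2 : b - a < c := by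
      by_contra! h
      nlinarith [mul_nonneg (by linarith : 0 ≤ b-a-c) (by linarith : 0 ≤ (b-(a-c)))]
    have h3 : a - b < c := by
      by_contra! h
      nlinarith [mul_nonneg (by linarith : 0 ≤ a-b-c) (by linarith : 0 ≤ (a+c-b))]
    have : (fun d => max (min a (d+b) - max (-a) (d-b)) 0) =ᶠ[nhds c] fun d => a + b - d := by
      filter_upwards [gt_mem_nhds h1, lt_mem_nhds h2, lt_mem_nhds h3] with d g1 g2 g3
      rw [min_eq_left (by linarith), max_eq_right (by linarith : -a ≤ d - b), max_eq_left (by linarith)]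
      ring
    refine HasDerivAt.congr_of_eventuallyEq ?_ this
    simpa using (hasDerivAt_id c).const_sub (a+b)
  · have hp : ((a+c)-b)*(b-(a-c))*((b+(a-c))*((a+c)+b)) < 0 := by
      have : 4*c^2*(a^2 - x^2) < 0 := by
        have : a^2 - x^2 < 0 := by
          rcases lt_or_gt_of_ne hne with h | h
          · exact absurd h hlt
          · linarith
        exact mul_neg_of_pos_of_neg hc2 this
      rw [hfac] at this; linarith
    have cases3 : a + b < c ∨ c < a - b ∨ c < b - a := by
      by_contra! h
      obtain ⟨g1, g2, g3⟩ := h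
      have : 0 ≤ ((a+c)-b)*(b-(a-c))*((b+(a-c))*((a+c)+b)) :=
        mul_nonneg (mul_nonneg (by linarith) (by linarith)) (mul_nonneg (by linarith) (by linarith))
      linarith
    have fin : ∀ k : ℝ, (∀ᶠ d in nhds c, max (min a (d+b) - max (-a) (d-b)) 0 = k) →
        HasDerivAt (fun d => max (min a (d+b) - max (-a) (d-b)) 0) 0 c := fun k h =>
      HasDerivAt.congr_of_eventuallyEq (hasDerivAt_const c k) h
    rcases cases3 with h | h | h
    · apply fin 0
      filter_upwards [lt_mem_nhds h, lt_mem_nhds hc] with d g g'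
      rw [min_eq_left (by linarith), max_eq_right (by linarith : -a ≤ d - b), max_eq_right (by linarith)]
    · apply fin (2*b)
      filter_upwards [gt_mem_nhds h, lt_mem_nhds hc] with d g g'
      rw [min_eq_right (by linarith), max_eq_right (by linarith : -a ≤ d - b), max_eq_left (by linarith)]
      ring
    · apply fin (2*a)
      filter_upwards [gt_mem_nhds h, lt_mem_nhds hc] with d g g'
      rw [min_eq_left (by linarith), max_eq_left (by linarith : d - b ≤ -a), max_eq_left (by linarith)]
      ring

lemma integral_deriv (R s c : ℝ) (hR : 0 < R) (hc : 0 < c) :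
    HasDerivAt (fun c => ∫ t, len R s c t)
      (-(2 * √(R^2 - ((c^2+R^2-s^2)/(2*c))^2))) c := by
  set q := R^2 - ((c^2+R^2-s^2)/(2*c))^2 with hq
  let F' : ℝ → ℝ := (Ioo (-√q) (√q)).indicator (fun _ => (-1:ℝ))
  let bound : ℝ → ℝ := (Icc (-R) R).indicator (fun _ => (2:ℝ))
  have hout : ∀ t, t ∉ Icc (-R) R → R^2 ≤ t^2 := by
    intro t ht
    by_contra! h
    exact ht ⟨(abs_lt_of_sq_lt_sq' h hR.le).1.le, (abs_lt_of_sq_lt_sq' h hR.le).2.le⟩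
  have hF' : Integrable F' := by
    rw [integrable_indicator_iff measurableSet_Ioo]
    exact integrableOn_const (by simp)
  have hb : Integrable bound := by
    rw [integrable_indicator_iff measurableSet_Icc]
    exact integrableOn_const (by simp)
  have hFi : Integrable (len R s c) := by
    have : len R s c = (Icc (-R) R).indicator (len R s c) := by
      symm; rw [indicator_eq_self]
      intro t ht
      by_contra h
      exact ht (len_zero R s c t (Or.inl (hout t h)))
    rw [this, integrable_indicator_iff measurableSet_Icc]
    exact (len_cont R s c).continuousOn.integrableOn_Icc
  have main := hasDerivAt_integral_of_dominated_loc_of_lip (μ := volume) (F := len R s) (F' := F')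
    (x₀ := c) (s := univ) (bound := bound) Filter.univ_mem
    (Filter.Eventually.of_forall fun d => (len_cont R s d).aestronglyMeasurable)
    hFi hF'.aestronglyMeasurable ?_ hb ?_
  · have := main.2
    have e : ∫ t, F' t = -(2*√q) := by
      simp only [F']
      rw [integral_indicator measurableSet_Ioo]
      simp [Real.sqrt_nonneg]
      ring
    rwa [e] at this
  · refine Filter.Eventually.of_forall fun t => ?_
    apply LipschitzOnWith.of_dist_le_mul
    intro d _ e _
    rw [Real.dist_eq, Real.dist_eq, Real.coe_nnabs]
    by_cases ht : t ∈ Icc (-R) R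
    · simpa [bound, ht] using len_lip R s t d e
    · rw [len_zero R s d t (Or.inl (hout t ht)), len_zero R s e t (Or.inl (hout t ht))]
      simp; positivity
  · have hfin : ({√q, -√q} : Set ℝ).Finite := by simp
    have : ∀ᵐ t : ℝ, t ∉ ({√q, -√q} : Set ℝ) := hfin.countable.ae_notMem _
    filter_upwards [this] with t ht
    have hne : t^2 ≠ q := by
      intro h
      apply ht
      have : t^2 = √q^2 := by rw [Real.sq_sqrt (h ▸ sq_nonneg t), h]
      simpa using sq_eq_sq_iff_eq_or_eq_neg.1 this
    have := len_deriv R s c t hc hne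
    have e : F' t = if t^2 < q then -1 else 0 := by
      have hm : t ∈ Ioo (-√q) (√q) ↔ t^2 < q := by rw [Real.sq_lt, mem_Ioo]
      by_cases h : t^2 < q
      · rw [if_pos h]; exact indicator_of_mem (hm.2 h) _
      · rw [if_neg h]; exact indicator_of_notMem (fun hh => h (hm.1 hh)) _
    rw [e]
    exact this

end AlphaAux

/-- With `α c = vol(B(O,R) ∩ B((c,0),s))` and `y c` the maximal second
coordinate of a point of `C(O,R) ∩ C((c,0),s)` (or `0` if the intersection is empty),
`α` is continuously differentiable on `(0,∞)` with `α' c = -2 * y c`, and `y` is continuous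
on `(0,∞)`. -/
theorem alpha_hasDerivAt
    (R s : ℝ) (hR : 0 < R) (hs : 0 < s)
    (α y : ℝ → ℝ)
    (hα : ∀ c, α c =
      (volume (ball (0 : EuclideanSpace ℝ (Fin 2)) R ∩ ball (pc c) s)).toReal)
    (hy : ∀ c, y c =
      if (sphere (0 : EuclideanSpace ℝ (Fin 2)) R ∩ sphere (pc c) s).Nonempty then
        sSup ((fun p : EuclideanSpace ℝ (Fin 2) => p 1) ''
          (sphere (0 : EuclideanSpace ℝ (Fin 2)) R ∩ sphere (pc c) s))
      else 0) :
    (∀ c, 0 < c → HasDerivAt α (-(2 * y c)) c) ∧ ContinuousOn y (Ioi 0) := by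
  have hy' : ∀ c, 0 < c → y c = √(R^2 - ((c^2+R^2-s^2)/(2*c))^2) := fun c hc => by
    rw [hy c]; exact AlphaAux.y_formula R s c hR hs hc
  have hα' : α = fun c => ∫ t, AlphaAux.len R s c t := by
    funext c
    rw [hα c]; exact AlphaAux.alpha_formula R s c hR hs
  constructor
  · intro c hc
    rw [hy' c hc, hα']
    exact AlphaAux.integral_deriv R s c hR hc
  · refine ContinuousOn.congr ?_ (fun c hc => hy' c hc)
    refine ContinuousOn.sqrt (continuousOn_const.sub (ContinuousOn.pow (ContinuousOn.div (by fun_prop) (by fun_prop) ?_) 2))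
    intro c hc
    have : 0 < c := hc
    positivity
end

section
/- Fix R > 0 and s > 0, and define α : (0,∞) → ℝ by α(c) = vol(B(O,R) ∩ B(p_c,s)) and y : (0,∞) → ℝ by letting y(c) be the maximum of the second coordinates of points of C(O,R) ∩ C(p_c,s) if this intersection is nonempty, and y(c) = 0 otherwise. Then for every c > 0 there exists δ₀ > 0 such that for all real δ with |δ| ≤ δ₀ (and c + δ > 0), one has |(α(c+δ) − α(c)) + 2·y(c)·δ| ≤ 2·|δ|·|y(c) − y(c+δ)|. -/
open Set MeasureTheory Metric
open scoped Classical

/-- Length of the horizontal slice. -/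
noncomputable def sliceLen (R s c η : ℝ) : ℝ :=
  max 0 (min (√(R ^ 2 - η ^ 2)) (c + √(s ^ 2 - η ^ 2)) -
    max (-√(R ^ 2 - η ^ 2)) (c - √(s ^ 2 - η ^ 2)))

/-- The half chord. -/
noncomputable def halfChord (R s c : ℝ) : ℝ :=
  √(R ^ 2 - ((c ^ 2 + R ^ 2 - s ^ 2) / (2 * c)) ^ 2)

lemma vol_eq_lintegral (R s c : ℝ) (hR : 0 < R) (hs : 0 < s) :
    volume (ball (0 : EuclideanSpace ℝ (Fin 2)) R ∩ ball (pc c) s) =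
      ∫⁻ η : ℝ, ENNReal.ofReal (sliceLen R s c η) := by
  have h1 := (EuclideanSpace.volume_preserving_symm_measurableEquiv_toLp (Fin 2)).symm
  have h2 := (volume_preserving_finTwoArrow ℝ).symm
  have h3 := h2.trans h1
  have hm : MeasurableSet (ball (0 : EuclideanSpace ℝ (Fin 2)) R ∩ ball (pc c) s) :=
    measurableSet_ball.inter measurableSet_ball
  rw [← h3.measure_preimage hm.nullMeasurableSet, Measure.volume_eq_prod,
    Measure.prod_apply_symm (h3.measurable hm)]
  refine lintegral_congr fun η => ?_
  have : (fun x : ℝ => (x, η)) ⁻¹' ((((MeasurableEquiv.finTwoArrow).symm.trans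
      (MeasurableEquiv.toLp 2 (Fin 2 → ℝ)).symm.symm) : ℝ × ℝ → EuclideanSpace ℝ (Fin 2)) ⁻¹'
      (ball (0 : EuclideanSpace ℝ (Fin 2)) R ∩ ball (pc c) s)) =
      Ioo (max (-√(R ^ 2 - η ^ 2)) (c - √(s ^ 2 - η ^ 2)))
        (min (√(R ^ 2 - η ^ 2)) (c + √(s ^ 2 - η ^ 2))) := by
    ext x
    have e1 : |x| < √(R ^ 2 - η ^ 2) ↔ x ^ 2 + η ^ 2 < R ^ 2 := by
      rw [Real.lt_sqrt (abs_nonneg _), sq_abs, lt_sub_iff_add_lt]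
    have e2 : |x - c| < √(s ^ 2 - η ^ 2) ↔ (x - c) ^ 2 + η ^ 2 < s ^ 2 := by
      rw [Real.lt_sqrt (abs_nonneg _), sq_abs, lt_sub_iff_add_lt]
    have f1 : √(x ^ 2 + η ^ 2) < R ↔ x ^ 2 + η ^ 2 < R ^ 2 := Real.sqrt_lt' hR
    have f2 : √((x - c) ^ 2 + η ^ 2) < s ↔ (x - c) ^ 2 + η ^ 2 < s ^ 2 := Real.sqrt_lt' hs
    have g1 : x ∈ Ioo (max (-√(R ^ 2 - η ^ 2)) (c - √(s ^ 2 - η ^ 2)))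
        (min (√(R ^ 2 - η ^ 2)) (c + √(s ^ 2 - η ^ 2))) ↔
        |x| < √(R ^ 2 - η ^ 2) ∧ |x - c| < √(s ^ 2 - η ^ 2) := by
      rw [abs_lt, abs_lt, mem_Ioo, max_lt_iff, lt_min_iff]
      constructor
      · rintro ⟨⟨_, _⟩, _, _⟩; refine ⟨⟨?_, ?_⟩, ?_, ?_⟩ <;> linarith
      · rintro ⟨⟨_, _⟩, _, _⟩; refine ⟨⟨?_, ?_⟩, ?_, ?_⟩ <;> linarith
    rw [g1, e1, e2, ← f1, ← f2]
    simp [EuclideanSpace.dist_eq, EuclideanSpace.norm_eq, pc, MeasurableEquiv.finTwoArrow,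
      Real.dist_eq, sq_abs]
  erw [this]
  rw [Real.volume_Ioo, sliceLen]
  rw [ENNReal.ofReal_max, ENNReal.ofReal_zero, max_eq_right (zero_le)]

lemma sliceLen_nonneg (R s c η : ℝ) : 0 ≤ sliceLen R s c η := le_max_left _ _

lemma sliceLen_cont (R s c : ℝ) : Continuous (sliceLen R s c) := by
  unfold sliceLen; fun_prop

lemma sliceLen_integrable (R s c : ℝ) (hR : 0 < R) (hs : 0 < s) :
    Integrable (sliceLen R s c) := by
  refine ⟨(sliceLen_cont R s c).aestronglyMeasurable, ?_⟩
  rw [hasFiniteIntegral_iff_ofReal (Filter.Eventually.of_forall (sliceLen_nonneg R s c)),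
    ← vol_eq_lintegral R s c hR hs]
  exact (measure_mono inter_subset_left).trans_lt measure_ball_lt_top

lemma vol_eq_integral (R s c : ℝ) (hR : 0 < R) (hs : 0 < s) :
    (volume (ball (0 : EuclideanSpace ℝ (Fin 2)) R ∩ ball (pc c) s)).toReal =
      ∫ η : ℝ, sliceLen R s c η := by
  rw [vol_eq_lintegral R s c hR hs, integral_eq_lintegral_of_nonneg_ae
    (Filter.Eventually.of_forall (sliceLen_nonneg R s c))
    (sliceLen_cont R s c).aestronglyMeasurable]

/-- one-dimensional overlap -/
lemma overlap_diff {w v a b : ℝ} (hw : 0 ≤ w) (hv : 0 ≤ v) (ha : 0 < a) (hab : a ≤ b) :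
    0 ≤ max 0 (min w (a + v) - max (-w) (a - v)) - max 0 (min w (b + v) - max (-w) (b - v)) ∧
    max 0 (min w (a + v) - max (-w) (a - v)) - max 0 (min w (b + v) - max (-w) (b - v))
      ≤ b - a := by
  constructor <;> grind

lemma overlap_eq {w v c : ℝ} (hw : 0 ≤ w) (hv : 0 ≤ v) (hc : 0 < c)
    (h1 : |v - w| < c) (h2 : c < v + w) :
    max 0 (min w (c + v) - max (-w) (c - v)) = v + w - c := by
  rw [abs_lt] at h1
  grind

lemma overlap_const {w v a b : ℝ} (hw : 0 ≤ w) (hv : 0 ≤ v) (ha : 0 < a) (hab : a ≤ b)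
    (h : b ≤ |v - w| ∨ v + w ≤ a) :
    max 0 (min w (a + v) - max (-w) (a - v)) = max 0 (min w (b + v) - max (-w) (b - v)) := by
  rw [le_abs] at h
  grind

lemma lt_halfChord_iff {R s c η : ℝ} (hc : 0 < c) (h1 : 0 < R ^ 2 - η ^ 2)
    (h2 : 0 < s ^ 2 - η ^ 2) :
    |η| < halfChord R s c ↔ |√(s ^ 2 - η ^ 2) - √(R ^ 2 - η ^ 2)| < c ∧
      c < √(s ^ 2 - η ^ 2) + √(R ^ 2 - η ^ 2) := by
  unfold halfChord
  rw [Real.lt_sqrt (abs_nonneg _), sq_abs]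
  have hv := Real.sqrt_pos.2 h2
  have hw := Real.sqrt_pos.2 h1
  have hv2 := Real.sq_sqrt h2.le
  have hw2 := Real.sq_sqrt h1.le
  set v := √(s ^ 2 - η ^ 2)
  set w := √(R ^ 2 - η ^ 2)
  have e : c ^ 2 + R ^ 2 - s ^ 2 = c ^ 2 + w ^ 2 - v ^ 2 := by linarith
  have : η ^ 2 < R ^ 2 - ((c ^ 2 + R ^ 2 - s ^ 2) / (2 * c)) ^ 2 ↔
      |(c ^ 2 + w ^ 2 - v ^ 2)| < w * (2 * c) := by
    rw [e]
    have : η ^ 2 < R ^ 2 - ((c ^ 2 + w ^ 2 - v ^ 2) / (2 * c)) ^ 2 ↔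
      ((c ^ 2 + w ^ 2 - v ^ 2) / (2 * c)) ^ 2 < w ^ 2 := by
      constructor <;> intro h <;> linarith
    rw [this, sq_lt_sq, abs_div, abs_of_pos hw, abs_of_pos (by positivity : 0 < 2 * c),
      div_lt_iff₀ (by positivity)]
  rw [this, abs_lt, abs_lt]
  constructor
  · rintro ⟨p, q⟩
    have p' : v < c + w := lt_of_pow_lt_pow_left₀ 2 (by positivity) (by nlinarith)
    have q' : |c - w| < v := by
      rw [← abs_of_pos hv, ← sq_lt_sq]; nlinarith
    rw [abs_lt] at q'
    refine ⟨⟨?_, ?_⟩, ?_⟩ <;> linarith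
  · rintro ⟨⟨p, q⟩, r⟩
    constructor
    · nlinarith
    · nlinarith

lemma halfChord_le_R {R s c : ℝ} (hR : 0 < R) : halfChord R s c ≤ R := by
  unfold halfChord
  rw [Real.sqrt_le_left hR.le]
  nlinarith [sq_nonneg ((c ^ 2 + R ^ 2 - s ^ 2) / (2 * c))]

lemma halfChord_le_s {R s c : ℝ} (hs : 0 < s) (hc : 0 < c) : halfChord R s c ≤ s := by
  unfold halfChord
  rw [Real.sqrt_le_left hs.le]
  have : s ^ 2 - (R ^ 2 - ((c ^ 2 + R ^ 2 - s ^ 2) / (2 * c)) ^ 2) =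
    ((c ^ 2 + R ^ 2 - s ^ 2) / (2 * c) - c) ^ 2 := by field_simp; ring
  nlinarith [sq_nonneg ((c ^ 2 + R ^ 2 - s ^ 2) / (2 * c) - c)]

lemma slice_lower {R s a b m η : ℝ} (hR : 0 < R) (hs : 0 < s) (ha : 0 < a) (hab : a ≤ b)
    (hma : m ≤ halfChord R s a) (hmb : m ≤ halfChord R s b) :
    (Ioo (-m) m).indicator (fun _ => b - a) η ≤ sliceLen R s a η - sliceLen R s b η := by
  by_cases h : η ∈ Ioo (-m) m
  · rw [indicator_of_mem h]
    have h' : |η| < m := abs_lt.2 h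
    have hb := ha.trans_le hab
    have h1 : 0 < R ^ 2 - η ^ 2 := by
      have : |η| < R := h'.trans_le (hma.trans (halfChord_le_R hR))
      have := (sq_lt_sq.2 (by rwa [abs_of_pos hR]) : η ^ 2 < R ^ 2); linarith
    have h2 : 0 < s ^ 2 - η ^ 2 := by
      have : |η| < s := h'.trans_le (hma.trans (halfChord_le_s hs ha))
      have := (sq_lt_sq.2 (by rwa [abs_of_pos hs]) : η ^ 2 < s ^ 2); linarith
    obtain ⟨p, q⟩ := (lt_halfChord_iff ha h1 h2).1 (h'.trans_le hma)
    obtain ⟨p', q'⟩ := (lt_halfChord_iff hb h1 h2).1 (h'.trans_le hmb)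
    unfold sliceLen
    rw [overlap_eq (Real.sqrt_nonneg _) (Real.sqrt_nonneg _) ha p q,
      overlap_eq (Real.sqrt_nonneg _) (Real.sqrt_nonneg _) hb p' q']
    linarith
  · rw [indicator_of_notMem h]
    exact (overlap_diff (Real.sqrt_nonneg _) (Real.sqrt_nonneg _) ha hab).1

lemma slice_upper {R s a b M η : ℝ} (ha : 0 < a) (hab : a ≤ b)
    (hM : ∀ t ∈ Icc a b, halfChord R s t ≤ M) :
    sliceLen R s a η - sliceLen R s b η ≤ (Ioo (-M) M).indicator (fun _ => b - a) η := by
  by_cases h : η ∈ Ioo (-M) M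
  · rw [indicator_of_mem h]
    exact (overlap_diff (Real.sqrt_nonneg _) (Real.sqrt_nonneg _) ha hab).2
  · rw [indicator_of_notMem h]
    have h' : M ≤ |η| := not_lt.1 fun hh => h (abs_lt.1 hh)
    have hb := ha.trans_le hab
    have hw := Real.sqrt_nonneg (R ^ 2 - η ^ 2)
    have hv := Real.sqrt_nonneg (s ^ 2 - η ^ 2)
    have key : b ≤ |√(s ^ 2 - η ^ 2) - √(R ^ 2 - η ^ 2)| ∨
        √(s ^ 2 - η ^ 2) + √(R ^ 2 - η ^ 2) ≤ a ∨
        √(s ^ 2 - η ^ 2) = 0 ∨ √(R ^ 2 - η ^ 2) = 0 := by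
      by_contra hcon
      push Not at hcon
      obtain ⟨c1, c2, c3, c4⟩ := hcon
      have hv' := lt_of_le_of_ne hv c3.symm
      have hw' := lt_of_le_of_ne hw c4.symm
      have h1 := Real.sqrt_pos.1 hw'
      have h2 := Real.sqrt_pos.1 hv'
      have hlt : |√(s ^ 2 - η ^ 2) - √(R ^ 2 - η ^ 2)| <
          √(s ^ 2 - η ^ 2) + √(R ^ 2 - η ^ 2) := by
        rw [abs_lt]; constructor <;> linarith
      by_cases hA : |√(s ^ 2 - η ^ 2) - √(R ^ 2 - η ^ 2)| < a
      · have := (lt_halfChord_iff ha h1 h2).2 ⟨hA, c2⟩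
        linarith [hM a ⟨le_rfl, hab⟩]
      · push Not at hA
        obtain ⟨t, t1, t2⟩ := exists_between (lt_min c1 hlt)
        have ht := lt_min_iff.1 t2
        have := (lt_halfChord_iff (by linarith) h1 h2).2 ⟨t1, ht.2⟩
        linarith [hM t ⟨by linarith, ht.1.le⟩]
    unfold sliceLen
    rcases key with k | k | k | k
    · rw [overlap_const hw hv ha hab (Or.inl k), sub_self]
    · rw [overlap_const hw hv ha hab (Or.inr k), sub_self]
    · rw [k]; grind
    · rw [k]; grind

lemma integral_ind {m d : ℝ} (hm : 0 ≤ m) :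
    ∫ η : ℝ, (Ioo (-m) m).indicator (fun _ => d) η = 2 * m * d := by
  rw [integral_indicator measurableSet_Ioo]
  simp [Measure.real, Real.volume_Ioo, ENNReal.toReal_ofReal (by linarith : 0 ≤ m + m)]
  left; ring

lemma integrable_ind (m d : ℝ) : Integrable ((Ioo (-m) m).indicator (fun _ : ℝ => d)) := by
  rw [integrable_indicator_iff measurableSet_Ioo]
  exact integrableOn_const (by simp)

lemma area_bounds {R s a b m M : ℝ} (hR : 0 < R) (hs : 0 < s) (ha : 0 < a) (hab : a ≤ b)
    (hm0 : 0 ≤ m) (hM0 : 0 ≤ M)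
    (hma : m ≤ halfChord R s a) (hmb : m ≤ halfChord R s b)
    (hM : ∀ t ∈ Icc a b, halfChord R s t ≤ M) :
    2 * m * (b - a) ≤ (∫ η, sliceLen R s a η) - ∫ η, sliceLen R s b η ∧
    (∫ η, sliceLen R s a η) - ∫ η, sliceLen R s b η ≤ 2 * M * (b - a) := by
  have ia := sliceLen_integrable R s a hR hs
  have ib := sliceLen_integrable R s b hR hs
  rw [← integral_sub ia ib, ← integral_ind hm0, ← integral_ind hM0]
  exact ⟨integral_mono (integrable_ind _ _) (ia.sub ib)
      fun η => slice_lower hR hs ha hab hma hmb,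
    integral_mono (ia.sub ib) (integrable_ind _ _) fun η => slice_upper ha hab hM⟩

lemma y_eq {R s c : ℝ} (hR : 0 < R) (hs : 0 < s) (hc : 0 < c) :
    (if (sphere (0 : EuclideanSpace ℝ (Fin 2)) R ∩ sphere (pc c) s).Nonempty then
        sSup ((fun p : EuclideanSpace ℝ (Fin 2) => p 1) ''
          (sphere (0 : EuclideanSpace ℝ (Fin 2)) R ∩ sphere (pc c) s))
      else 0) = halfChord R s c := by
  have hmem : ∀ p : EuclideanSpace ℝ (Fin 2),
      p ∈ sphere (0 : EuclideanSpace ℝ (Fin 2)) R ∩ sphere (pc c) s ↔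
      p 0 = (c ^ 2 + R ^ 2 - s ^ 2) / (2 * c) ∧
      p 1 ^ 2 = R ^ 2 - ((c ^ 2 + R ^ 2 - s ^ 2) / (2 * c)) ^ 2 := by
    intro p
    have e1 : p ∈ sphere (0 : EuclideanSpace ℝ (Fin 2)) R ↔ p 0 ^ 2 + p 1 ^ 2 = R ^ 2 := by
      rw [mem_sphere_zero_iff_norm, EuclideanSpace.norm_eq,
        Real.sqrt_eq_iff_eq_sq (by positivity) hR.le]
      simp
    have e2 : p ∈ sphere (pc c) s ↔ (p 0 - c) ^ 2 + p 1 ^ 2 = s ^ 2 := by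
      rw [mem_sphere, EuclideanSpace.dist_eq, Real.sqrt_eq_iff_eq_sq (by positivity) hs.le]
      simp [pc, Real.dist_eq]
    rw [mem_inter_iff, e1, e2]
    constructor
    · rintro ⟨h1, h2⟩
      have h0 : p 0 = (c ^ 2 + R ^ 2 - s ^ 2) / (2 * c) := by
        rw [eq_div_iff (by positivity)]; nlinarith
      refine ⟨h0, ?_⟩
      rw [← h0]; linarith
    · rintro ⟨h0, h1⟩
      rw [← h0] at h1
      rw [eq_div_iff (by positivity)] at h0
      constructor <;> nlinarith
  by_cases hn : 0 ≤ R ^ 2 - ((c ^ 2 + R ^ 2 - s ^ 2) / (2 * c)) ^ 2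
  · have hp : (!₂[(c ^ 2 + R ^ 2 - s ^ 2) / (2 * c), halfChord R s c] :
        EuclideanSpace ℝ (Fin 2)) ∈
        sphere (0 : EuclideanSpace ℝ (Fin 2)) R ∩ sphere (pc c) s := by
      rw [hmem]
      refine ⟨by simp, ?_⟩
      simpa [halfChord] using Real.sq_sqrt hn
    rw [if_pos ⟨_, hp⟩]
    refine IsGreatest.csSup_eq ⟨⟨_, hp, by simp⟩, ?_⟩
    rintro _ ⟨p, hp', rfl⟩
    exact Real.le_sqrt_of_sq_le ((hmem p).1 hp').2.le
  · rw [if_neg, halfChord, Real.sqrt_eq_zero_of_nonpos (by linarith)]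
    rintro ⟨p, hp⟩
    have := ((hmem p).1 hp).2
    exact hn (this ▸ sq_nonneg _)

lemma chord_sq {R s c : ℝ} (hc : 0 < c) : ((c ^ 2 + R ^ 2 - s ^ 2) / (2 * c)) ^ 2 =
    c ^ 2 / 4 + (R ^ 2 - s ^ 2) / 2 + (R ^ 2 - s ^ 2) ^ 2 / (4 * c ^ 2) := by
  field_simp; ring

lemma halfChord_mono {R s x z : ℝ} (hx : 0 < x) (hxz : x ≤ z)
    (hz : z ^ 2 ≤ |R ^ 2 - s ^ 2|) : halfChord R s x ≤ halfChord R s z := by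
  have hz0 := hx.trans_le hxz
  refine Real.sqrt_le_sqrt (sub_le_sub_left ?_ _)
  rw [chord_sq hx, chord_sq hz0]
  have hxz2 : x ^ 2 ≤ z ^ 2 := by gcongr
  have hD : x ^ 2 * z ^ 2 ≤ (R ^ 2 - s ^ 2) ^ 2 := by
    rw [← sq_abs (R ^ 2 - s ^ 2), sq |_|]
    exact mul_le_mul (hxz2.trans hz) hz (by positivity) (abs_nonneg _)
  have : (x ^ 2 / 4 + (R ^ 2 - s ^ 2) / 2 + (R ^ 2 - s ^ 2) ^ 2 / (4 * x ^ 2)) -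
      (z ^ 2 / 4 + (R ^ 2 - s ^ 2) / 2 + (R ^ 2 - s ^ 2) ^ 2 / (4 * z ^ 2)) =
      (z ^ 2 - x ^ 2) * ((R ^ 2 - s ^ 2) ^ 2 - x ^ 2 * z ^ 2) / (4 * x ^ 2 * z ^ 2) := by
    field_simp; ring
  have : 0 ≤ (z ^ 2 - x ^ 2) * ((R ^ 2 - s ^ 2) ^ 2 - x ^ 2 * z ^ 2) / (4 * x ^ 2 * z ^ 2) :=
    div_nonneg (mul_nonneg (by linarith) (by linarith)) (by positivity)
  linarith

lemma halfChord_anti {R s x z : ℝ} (hx : 0 < x) (hxz : x ≤ z)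
    (hz : |R ^ 2 - s ^ 2| ≤ x ^ 2) : halfChord R s z ≤ halfChord R s x := by
  have hz0 := hx.trans_le hxz
  refine Real.sqrt_le_sqrt (sub_le_sub_left ?_ _)
  rw [chord_sq hx, chord_sq hz0]
  have hxz2 : x ^ 2 ≤ z ^ 2 := by gcongr
  have hD : (R ^ 2 - s ^ 2) ^ 2 ≤ x ^ 2 * z ^ 2 := by
    rw [← sq_abs (R ^ 2 - s ^ 2), sq |_|]
    exact mul_le_mul hz (hz.trans hxz2) (abs_nonneg _) (by positivity)
  have : (z ^ 2 / 4 + (R ^ 2 - s ^ 2) / 2 + (R ^ 2 - s ^ 2) ^ 2 / (4 * z ^ 2)) -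
      (x ^ 2 / 4 + (R ^ 2 - s ^ 2) / 2 + (R ^ 2 - s ^ 2) ^ 2 / (4 * x ^ 2)) =
      (z ^ 2 - x ^ 2) * (x ^ 2 * z ^ 2 - (R ^ 2 - s ^ 2) ^ 2) / (4 * x ^ 2 * z ^ 2) := by
    field_simp; ring
  have : 0 ≤ (z ^ 2 - x ^ 2) * (x ^ 2 * z ^ 2 - (R ^ 2 - s ^ 2) ^ 2) / (4 * x ^ 2 * z ^ 2) :=
    div_nonneg (mul_nonneg (by linarith) (by linarith)) (by positivity)
  linarith

lemma area_between {R s a b : ℝ} (hR : 0 < R) (hs : 0 < s) (ha : 0 < a) (hab : a ≤ b)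
    (h : b ≤ √|R ^ 2 - s ^ 2| ∨ √|R ^ 2 - s ^ 2| ≤ a) :
    2 * min (halfChord R s a) (halfChord R s b) * (b - a) ≤
      (∫ η, sliceLen R s a η) - ∫ η, sliceLen R s b η ∧
    (∫ η, sliceLen R s a η) - ∫ η, sliceLen R s b η ≤
      2 * max (halfChord R s a) (halfChord R s b) * (b - a) := by
  have hb := ha.trans_le hab
  refine area_bounds hR hs ha hab (le_min (Real.sqrt_nonneg _) (Real.sqrt_nonneg _))
    (le_max_of_le_left (Real.sqrt_nonneg _)) (min_le_left _ _) (min_le_right _ _) ?_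
  rintro t ⟨h1, h2⟩
  rcases h with h | h
  · exact le_max_of_le_right (halfChord_mono (by linarith) h2 ((Real.le_sqrt hb.le (abs_nonneg _)).1 h))
  · exact le_max_of_le_left (halfChord_anti ha h1 ((Real.sqrt_le_left ha.le).1 h))

theorem alpha_difference_estimate
    (R s : ℝ) (hR : 0 < R) (hs : 0 < s)
    (α y : ℝ → ℝ)
    (hα : ∀ c, α c =
      (volume (ball (0 : EuclideanSpace ℝ (Fin 2)) R ∩ ball (pc c) s)).toReal)
    (hy : ∀ c, y c =
      if (sphere (0 : EuclideanSpace ℝ (Fin 2)) R ∩ sphere (pc c) s).Nonempty then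
        sSup ((fun p : EuclideanSpace ℝ (Fin 2) => p 1) ''
          (sphere (0 : EuclideanSpace ℝ (Fin 2)) R ∩ sphere (pc c) s))
      else 0) :
    ∀ c, 0 < c → ∃ δ₀ > (0:ℝ), ∀ δ : ℝ, |δ| ≤ δ₀ → 0 < c + δ →
      |(α (c + δ) - α c) + 2 * y c * δ| ≤ 2 * |δ| * |y c - y (c + δ)| := by
  intro c hc
  obtain ⟨δ₀, hδ₀, hδ⟩ : ∃ δ₀ > (0:ℝ), ∀ δ : ℝ, |δ| ≤ δ₀ →
      (c ≤ √|R ^ 2 - s ^ 2| ∧ c + δ ≤ √|R ^ 2 - s ^ 2|) ∨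
      (√|R ^ 2 - s ^ 2| ≤ c ∧ √|R ^ 2 - s ^ 2| ≤ c + δ) := by
    rcases lt_trichotomy c (√|R ^ 2 - s ^ 2|) with h | h | h
    · refine ⟨√|R ^ 2 - s ^ 2| - c, by linarith, fun δ hd => Or.inl ⟨h.le, ?_⟩⟩
      linarith [(abs_le.1 hd).2]
    · refine ⟨1, one_pos, fun δ hd => ?_⟩
      rcases le_total δ 0 with h0 | h0
      · left; constructor <;> linarith
      · right; constructor <;> linarith
    · refine ⟨c - √|R ^ 2 - s ^ 2|, by linarith, fun δ hd => Or.inr ⟨h.le, ?_⟩⟩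
      linarith [(abs_le.1 hd).1]
  refine ⟨δ₀, hδ₀, fun δ hd hcd => ?_⟩
  have hm := hδ δ hd
  rw [hα, hα, hy c, hy (c + δ), y_eq hR hs hc, y_eq hR hs hcd, vol_eq_integral R s _ hR hs,
    vol_eq_integral R s _ hR hs]
  rcases le_total 0 δ with h0 | h0
  · obtain ⟨p, q⟩ := area_between hR hs hc (by linarith : c ≤ c + δ) (by tauto)
    rw [abs_of_nonneg h0]
    rcases le_total (halfChord R s c) (halfChord R s (c + δ)) with k | k
    · rw [min_eq_left k] at p
      rw [max_eq_right k] at q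
      rw [abs_of_nonpos (by linarith : halfChord R s c - halfChord R s (c + δ) ≤ 0), abs_le]
      constructor <;> nlinarith
    · rw [min_eq_right k] at p
      rw [max_eq_left k] at q
      rw [abs_of_nonneg (by linarith : 0 ≤ halfChord R s c - halfChord R s (c + δ)), abs_le]
      constructor <;> nlinarith
  · obtain ⟨p, q⟩ := area_between hR hs hcd (by linarith : c + δ ≤ c) (by tauto)
    rw [abs_of_nonpos h0]
    rcases le_total (halfChord R s c) (halfChord R s (c + δ)) with k | k
    · rw [min_eq_right k] at p
      rw [max_eq_left k] at q
      rw [abs_of_nonpos (by linarith : halfChord R s c - halfChord R s (c + δ) ≤ 0), abs_le]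
      constructor <;> nlinarith
    · rw [min_eq_left k] at p
      rw [max_eq_right k] at q
      rw [abs_of_nonneg (by linarith : 0 ≤ halfChord R s c - halfChord R s (c + δ)), abs_le]
      constructor <;> nlinarith
end

section
/- Fix 0 < R < Q and s > 0. Let A_{R,Q} = {p ∈ ℝ² : R ≤ ‖p‖ ≤ Q} and define γ : (0,∞) → ℝ by γ(c) = vol(A_{R,Q} ∩ B(p_c,s)). Suppose c > 0 satisfies c + s > Q, s − c < R, and c − s < R. Then: γ′(c) = 0 if and only if c² + s² = (R² + Q²)/2; γ′(c) > 0 if and only if c² + s² < (R² + Q²)/2; and γ′(c) < 0 if and only if c² + s² > (R² + Q²)/2, where γ′(c) denotes the derivative of γ at c (which exists). -/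
open Set MeasureTheory Metric

/-- Slice half-height. -/
noncomputable def hfun (r s x t : ℝ) : ℝ := √(min (r ^ 2 - t ^ 2) (s ^ 2 - (t - x) ^ 2))

lemma hfun_cont (r s x : ℝ) : Continuous (hfun r s x) := by
  unfold hfun; fun_prop

lemma lens_eq (r s x : ℝ) (hr : 0 < r) (hs : 0 < s) :
    (ball (0 : EuclideanSpace ℝ (Fin 2)) r ∩ ball (pc x) s) =
      (fun p : EuclideanSpace ℝ (Fin 2) => MeasurableEquiv.finTwoArrow (WithLp.ofLp p)) ⁻¹'
        regionBetween (-hfun r s x) (hfun r s x) (Ioc (-r) r) := by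
  ext p
  have e1 : ‖p‖ < r ↔ p 0 ^ 2 + p 1 ^ 2 < r ^ 2 := by
    rw [← sq_lt_sq₀ (norm_nonneg _) hr.le, EuclideanSpace.real_norm_sq_eq, Fin.sum_univ_two]
  have e2 : ‖p - pc x‖ < s ↔ (p 0 - x) ^ 2 + p 1 ^ 2 < s ^ 2 := by
    rw [← sq_lt_sq₀ (norm_nonneg _) hs.le, EuclideanSpace.real_norm_sq_eq, Fin.sum_univ_two]
    simp [pc]
  have e3 : MeasurableEquiv.finTwoArrow (WithLp.ofLp p) = (p 0, p 1) := rfl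
  simp only [mem_inter_iff, mem_ball, dist_eq_norm, sub_zero, e1, e2, mem_preimage, regionBetween,
    mem_ofPred_eq, e3, Pi.neg_apply,
    mem_Ioo, hfun, ← Real.sq_lt, lt_min_iff, mem_Ioc]
  constructor
  · rintro ⟨h1, h2⟩
    refine ⟨?_, by linarith, by linarith⟩
    have := abs_lt_of_sq_lt_sq' (a := p 0) (b := r) (by nlinarith [sq_nonneg (p 1)]) hr.le
    exact ⟨this.1, this.2.le⟩
  · rintro ⟨_, h1, h2⟩
    constructor <;> linarith

lemma lens_vol (r s x : ℝ) (hr : 0 < r) (hs : 0 < s) :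
    volume.real (ball (0 : EuclideanSpace ℝ (Fin 2)) r ∩ ball (pc x) s) =
      ∫ t in (-r)..r, 2 * hfun r s x t := by
  have hp : MeasurePreserving (fun p : EuclideanSpace ℝ (Fin 2) =>
      MeasurableEquiv.finTwoArrow (WithLp.ofLp p)) volume (volume : Measure (ℝ × ℝ)) :=
    (volume_preserving_finTwoArrow ℝ).comp (PiLp.volume_preserving_ofLp (Fin 2))
  have hc := hfun_cont r s x
  rw [lens_eq r s x hr hs, hp.measureReal_preimage
    (measurableSet_regionBetween hc.neg.measurable hc.measurable
      measurableSet_Ioc).nullMeasurableSet, intervalIntegral.integral_of_le (by linarith)]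
  have h0 : ∀ t, 0 ≤ hfun r s x t := fun t => Real.sqrt_nonneg _
  rw [measureReal_def, Measure.volume_eq_prod, volume_regionBetween_eq_integral
    (hc.neg.integrableOn_Ioc) hc.integrableOn_Ioc measurableSet_Ioc
    (fun t _ => by rw [Pi.neg_apply]; linarith [h0 t]), ENNReal.toReal_ofReal]
  · congr 1; ext t; simp; ring
  · apply setIntegral_nonneg measurableSet_Ioc
    intro t _
    simp; linarith [h0 t]

lemma lens_formula (r s x : ℝ) (hr : 0 < r) (hs : 0 < s) (hx : 0 < x) (h1 : r < x + s)
    (h2 : s - x < r) (h3 : x - s < r) :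
    volume.real (ball (0 : EuclideanSpace ℝ (Fin 2)) r ∩ ball (pc x) s) =
      2 * ((∫ u in (0:ℝ)..((x ^ 2 + r ^ 2 - s ^ 2) / (2 * x) - x), √(s ^ 2 - u ^ 2))
        - (∫ u in (0:ℝ)..(-r - x), √(s ^ 2 - u ^ 2)))
      + 2 * ((∫ u in (0:ℝ)..r, √(r ^ 2 - u ^ 2))
        - ∫ u in (0:ℝ)..((x ^ 2 + r ^ 2 - s ^ 2) / (2 * x)), √(r ^ 2 - u ^ 2)) := by
  have hcs : Continuous fun u : ℝ => √(s ^ 2 - u ^ 2) := by fun_prop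
  have hcr : Continuous fun u : ℝ => √(r ^ 2 - u ^ 2) := by fun_prop
  have hcc : Continuous fun t => 2 * hfun r s x t := continuous_const.mul (hfun_cont r s x)
  rw [lens_vol r s x hr hs, intervalIntegral.integral_interval_sub_left
    (hcs.intervalIntegrable _ _) (hcs.intervalIntegrable _ _),
    intervalIntegral.integral_interval_sub_left
    (hcr.intervalIntegrable _ _) (hcr.intervalIntegrable _ _)]
  set a := (x ^ 2 + r ^ 2 - s ^ 2) / (2 * x) with ha
  have ha' : 2 * x * a = x ^ 2 + r ^ 2 - s ^ 2 := by rw [ha]; field_simp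
  have hal : -r ≤ a := by
    rw [ha, le_div_iff₀ (by positivity)]; nlinarith
  have har : a ≤ r := by
    rw [ha, div_le_iff₀ (by positivity)]; nlinarith
  rw [← intervalIntegral.integral_comp_sub_right (fun u => √(s ^ 2 - u ^ 2)) x,
    ← intervalIntegral.integral_add_adjacent_intervals (hcc.intervalIntegrable (-r) a)
    (hcc.intervalIntegrable a r), ← intervalIntegral.integral_const_mul,
    ← intervalIntegral.integral_const_mul]
  congr 1
  · apply intervalIntegral.integral_congr
    intro t ht
    rw [uIcc_of_le hal] at ht
    have := ht.2
    simp only [hfun]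
    rw [min_eq_right]
    nlinarith
  · apply intervalIntegral.integral_congr
    intro t ht
    rw [uIcc_of_le har] at ht
    have := ht.1
    simp only [hfun]
    rw [min_eq_left]
    nlinarith

lemma lens_deriv (r s c : ℝ) (hr : 0 < r) (hs : 0 < s) (hc : 0 < c) (h1 : r < c + s)
    (h2 : s - c < r) (h3 : c - s < r) :
    HasDerivAt (fun x => volume.real (ball (0 : EuclideanSpace ℝ (Fin 2)) r ∩ ball (pc x) s))
      (-2 * √(r ^ 2 - ((c ^ 2 + r ^ 2 - s ^ 2) / (2 * c)) ^ 2)) c := by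
  have hcs : Continuous fun u : ℝ => √(s ^ 2 - u ^ 2) := by fun_prop
  have hcr : Continuous fun u : ℝ => √(r ^ 2 - u ^ 2) := by fun_prop
  have hda : ∃ a', HasDerivAt (fun x : ℝ => (x ^ 2 + r ^ 2 - s ^ 2) / (2 * x)) a' c := by
    refine ⟨_, DifferentiableAt.hasDerivAt ?_⟩
    apply DifferentiableAt.div (by fun_prop) (by fun_prop) (by positivity)
  obtain ⟨a', hda⟩ := hda
  have F := fun b => (hcs.integral_hasStrictDerivAt 0 b).hasDerivAt
  have G := fun b => (hcr.integral_hasStrictDerivAt 0 b).hasDerivAt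
  have d1 := (F _).comp c (hda.sub (hasDerivAt_id c))
  have d2 := (F _).comp c ((hasDerivAt_id c).const_sub (-r))
  have d3 := (G _).comp c hda
  have D := ((d1.sub d2).const_mul 2).add ((d3.const_sub (∫ u in (0:ℝ)..r, √(r ^ 2 - u ^ 2))).const_mul 2)
  have hev : ∀ᶠ x in nhds c, 0 < x ∧ r < x + s ∧ s - x < r ∧ x - s < r := by
    filter_upwards [eventually_gt_nhds hc, eventually_gt_nhds (show r - s < c by linarith),
      eventually_gt_nhds (show s - r < c by linarith),
      eventually_lt_nhds (show c < r + s by linarith)] with x k1 k2 k3 k4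
    exact ⟨k1, by linarith, by linarith, by linarith⟩
  have D' := D.congr_of_eventuallyEq (f₁ := fun x =>
    volume.real (ball (0 : EuclideanSpace ℝ (Fin 2)) r ∩ ball (pc x) s)) (by
      filter_upwards [hev] with x hx
      rw [lens_formula r s x hr hs hx.1 hx.2.1 hx.2.2.1 hx.2.2.2]
      rfl)
  refine HasDerivAt.congr_deriv D' ?_
  simp only [Pi.sub_apply, id]
  set a := (c ^ 2 + r ^ 2 - s ^ 2) / (2 * c) with ha
  have ha' : 2 * c * a = c ^ 2 + r ^ 2 - s ^ 2 := by rw [ha]; field_simp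
  have e1 : s ^ 2 - (a - c) ^ 2 = r ^ 2 - a ^ 2 := by nlinarith
  have e2 : √(s ^ 2 - (-r - c) ^ 2) = 0 := Real.sqrt_eq_zero_of_nonpos (by nlinarith)
  rw [e1, e2]
  ring

lemma annulus_vol (R Q s x : ℝ) (hRQ : R < Q) :
    volume.real ({p : EuclideanSpace ℝ (Fin 2) | R ≤ ‖p‖ ∧ ‖p‖ ≤ Q} ∩ ball (pc x) s) =
      volume.real (ball (0 : EuclideanSpace ℝ (Fin 2)) Q ∩ ball (pc x) s) -
      volume.real (ball (0 : EuclideanSpace ℝ (Fin 2)) R ∩ ball (pc x) s) := by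
  have hfin : volume (ball (0 : EuclideanSpace ℝ (Fin 2)) Q ∩ ball (pc x) s) ≠ ⊤ :=
    ((measure_mono inter_subset_left).trans_lt measure_ball_lt_top).ne
  rw [← measureReal_sdiff (inter_subset_inter_left _ (ball_subset_ball hRQ.le))
    (measurableSet_ball.inter measurableSet_ball) hfin]
  apply measureReal_congr
  apply Filter.eventuallyEq_set.2
  have h0 : volume (sphere (0 : EuclideanSpace ℝ (Fin 2)) Q) = 0 := Measure.addHaar_sphere _ _ _
  filter_upwards [measure_eq_zero_iff_ae_notMem.1 h0] with p hp
  simp only [mem_sphere, dist_zero_right] at hp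
  simp only [mem_inter_iff, mem_ofPred_eq, mem_sdiff, mem_ball_zero_iff]
  constructor
  · rintro ⟨⟨a, b⟩, d⟩
    exact ⟨⟨lt_of_le_of_ne b hp, d⟩, fun h => absurd h.1 (not_lt.2 a)⟩
  · rintro ⟨⟨a, b⟩, d⟩
    exact ⟨⟨not_lt.1 fun h => d ⟨h, b⟩, a.le⟩, b⟩

/-- With `γ c = vol(A_{R,Q} ∩ B((c,0),s))`, if `c + s > Q`, `s - c < R` and
`c - s < R`, then `γ` is differentiable at `c` and its derivative is zero (resp. positive,
negative) exactly when `c² + s²` equals (resp. is less than, greater than) `(R² + Q²)/2`. -/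
theorem gamma_deriv_sign
    (R Q s c : ℝ) (hR : 0 < R) (hRQ : R < Q) (hs : 0 < s) (hc : 0 < c)
    (h1 : Q < c + s) (h2 : s - c < R) (h3 : c - s < R)
    (γ : ℝ → ℝ)
    (hγ : ∀ x, γ x =
      (volume ({p : EuclideanSpace ℝ (Fin 2) | R ≤ ‖p‖ ∧ ‖p‖ ≤ Q} ∩ ball (pc x) s)).toReal) :
    ∃ d : ℝ, HasDerivAt γ d c ∧
      (d = 0 ↔ c ^ 2 + s ^ 2 = (R ^ 2 + Q ^ 2) / 2) ∧
      (0 < d ↔ c ^ 2 + s ^ 2 < (R ^ 2 + Q ^ 2) / 2) ∧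
      (d < 0 ↔ (R ^ 2 + Q ^ 2) / 2 < c ^ 2 + s ^ 2) := by
  have hQ : 0 < Q := hR.trans hRQ
  have dQ := lens_deriv Q s c hQ hs hc h1 (by linarith) (by linarith)
  have dR := lens_deriv R s c hR hs hc (by linarith) h2 h3
  have D := dQ.sub dR
  have hg : γ = (fun x => volume.real (ball (0 : EuclideanSpace ℝ (Fin 2)) Q ∩ ball (pc x) s)) -
      fun x => volume.real (ball (0 : EuclideanSpace ℝ (Fin 2)) R ∩ ball (pc x) s) := by
    ext x
    rw [hγ]
    exact annulus_vol R Q s x hRQ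
  rw [← hg] at D
  refine ⟨_, D, ?_⟩
  set aQ := (c ^ 2 + Q ^ 2 - s ^ 2) / (2 * c) with haQ
  set aR := (c ^ 2 + R ^ 2 - s ^ 2) / (2 * c) with haR
  have pos : ∀ r : ℝ, 0 < r → r < c + s → s - c < r → c - s < r →
      0 < r ^ 2 - ((c ^ 2 + r ^ 2 - s ^ 2) / (2 * c)) ^ 2 := by
    intro r hr k1 k2 k3
    have : ((c ^ 2 + r ^ 2 - s ^ 2) / (2 * c)) ^ 2 < r ^ 2 := by
      apply sq_lt_sq'
      · rw [lt_div_iff₀ (by positivity)]; nlinarith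
      · rw [div_lt_iff₀ (by positivity)]; nlinarith
    linarith
  have pQ := pos Q hQ h1 (by linarith) (by linarith)
  have pR := pos R hR (by linarith) h2 h3
  rw [← haQ] at pQ
  rw [← haR] at pR
  have key : 4 * c ^ 2 * ((Q ^ 2 - aQ ^ 2) - (R ^ 2 - aR ^ 2)) =
      (Q ^ 2 - R ^ 2) * (2 * (c ^ 2 + s ^ 2) - (R ^ 2 + Q ^ 2)) := by
    rw [haQ, haR]; field_simp; ring
  have hd : 0 < Q ^ 2 - R ^ 2 := by nlinarith
  have hc2 : 0 < 4 * c ^ 2 := by positivity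
  have tri : ∀ u v : ℝ, u < v → 0 < v → √u < √v := fun u v h hv => Real.sqrt_lt_sqrt_iff_of_pos hv |>.2 h
  rcases lt_trichotomy (c ^ 2 + s ^ 2) ((R ^ 2 + Q ^ 2) / 2) with h | h | h
  · have hlt : Q ^ 2 - aQ ^ 2 < R ^ 2 - aR ^ 2 := by
      by_contra hn
      have := mul_nonneg hc2.le (sub_nonneg.2 (not_lt.1 hn))
      have := mul_neg_of_pos_of_neg hd (show 2 * (c ^ 2 + s ^ 2) - (R ^ 2 + Q ^ 2) < 0 by linarith)
      linarith
    have hsq := tri _ _ hlt pR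
    refine ⟨⟨fun _ => by linarith, fun _ => by linarith⟩, ⟨fun _ => h, fun _ => by linarith⟩,
      ⟨fun _ => by linarith, fun _ => by linarith⟩⟩
  · have heq : Q ^ 2 - aQ ^ 2 = R ^ 2 - aR ^ 2 := by
      have h0 : 2 * (c ^ 2 + s ^ 2) - (R ^ 2 + Q ^ 2) = 0 := by linarith
      rw [h0, mul_zero] at key
      have := (mul_eq_zero.1 key).resolve_left hc2.ne'
      linarith
    rw [heq]
    refine ⟨⟨fun _ => h, fun _ => by linarith⟩, ⟨fun _ => by linarith, fun _ => by linarith⟩,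
      ⟨fun _ => by linarith, fun _ => by linarith⟩⟩
  · have hlt : R ^ 2 - aR ^ 2 < Q ^ 2 - aQ ^ 2 := by
      by_contra hn
      have := mul_nonneg hc2.le (sub_nonneg.2 (not_lt.1 hn))
      have := mul_pos hd (show 0 < 2 * (c ^ 2 + s ^ 2) - (R ^ 2 + Q ^ 2) by linarith)
      linarith
    have hsq := tri _ _ hlt pQ
    refine ⟨⟨fun _ => by linarith, fun _ => by linarith⟩, ⟨fun _ => by linarith, fun _ => by linarith⟩,
      ⟨fun _ => h, fun _ => by linarith⟩⟩
end

section
/- Fix 0 < R < Q and s > 0. Let A_{R,Q} = {p ∈ ℝ² : R ≤ ‖p‖ ≤ Q} and define γ : (0,∞) → ℝ by γ(c) = vol(A_{R,Q} ∩ B(p_c,s)). Suppose 0 < c ≤ c′ are such that both c and c′ satisfy the conditions (x + s > Q, s − x < R, x − s < R for x ∈ {c, c′}), and suppose γ′(c) > 0 and γ′(c′) > 0, where γ′ denotes the derivative of γ. Then γ′(c) ≥ γ′(c′). -/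
open Set MeasureTheory Metric

/-- length of the horizontal slice -/
noncomputable def sl (ρ s x y : ℝ) : ℝ :=
  max 0 (min (2 * min (√(ρ^2 - y^2)) (√(s^2 - y^2))) (√(ρ^2 - y^2) + √(s^2 - y^2) - x))

/-- squared half chord -/
noncomputable def hsq (ρ s x : ℝ) : ℝ := s^2 - ((x^2 + s^2 - ρ^2) / (2 * x))^2

lemma pc_norm (p : EuclideanSpace ℝ (Fin 2)) (ρ : ℝ) (hρ : 0 < ρ) :
    ‖p‖ < ρ ↔ p 0 ^ 2 + p 1 ^ 2 < ρ ^ 2 := by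
  rw [EuclideanSpace.norm_eq, Real.sqrt_lt' hρ]
  simp [Fin.sum_univ_two]

lemma slice_eq (ρ y : ℝ) (t : ℝ) : t ^ 2 + y ^ 2 < ρ ^ 2 ↔
    -√(ρ^2 - y^2) < t ∧ t < √(ρ^2 - y^2) := by
  rw [← abs_lt, Real.lt_sqrt (abs_nonneg _), sq_abs]
  constructor <;> intro h <;> linarith

lemma vol_slice (ρ s x : ℝ) (hρ : 0 < ρ) (hs : 0 < s) (hx : 0 < x) :
    (volume (ball (0 : EuclideanSpace ℝ (Fin 2)) ρ ∩ ball (pc x) s)).toReal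
      = ∫ y, sl ρ s x y := by
  set S : Set (ℝ × ℝ) := {q | q.1 ^ 2 + q.2 ^ 2 < ρ ^ 2 ∧ (q.1 - x) ^ 2 + q.2 ^ 2 < s ^ 2} with hS
  have hSm : MeasurableSet S := by
    apply IsOpen.measurableSet
    have o1 : IsOpen {q : ℝ × ℝ | q.1 ^ 2 + q.2 ^ 2 < ρ ^ 2} :=
      isOpen_lt (by fun_prop) (by fun_prop)
    have o2 : IsOpen {q : ℝ × ℝ | (q.1 - x) ^ 2 + q.2 ^ 2 < s ^ 2} :=
      isOpen_lt (by fun_prop) (by fun_prop)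
    exact o1.inter o2
  have e1 := (MeasureTheory.volume_preserving_finTwoArrow ℝ).comp
    (EuclideanSpace.volume_preserving_symm_measurableEquiv_toLp (Fin 2))
  have hv : volume (ball (0 : EuclideanSpace ℝ (Fin 2)) ρ ∩ ball (pc x) s) = volume S := by
    rw [← e1.measure_preimage hSm.nullMeasurableSet]
    congr 1
    ext p
    simp only [mem_inter_iff, mem_ball, dist_eq_norm, sub_zero, pc_norm _ _ hρ, pc_norm _ _ hs]
    simp [hS, pc]
  have hsl : ∀ y, volume ((fun t => (t, y)) ⁻¹' S) = ENNReal.ofReal (sl ρ s x y) := by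
    intro y
    have : ((fun t => (t, y)) ⁻¹' S) =
        Ioo (max (-√(ρ^2 - y^2)) (x - √(s^2 - y^2))) (min (√(ρ^2 - y^2)) (x + √(s^2 - y^2))) := by
      ext t
      simp only [hS, mem_preimage, mem_setOf_eq, slice_eq, mem_Ioo, max_lt_iff, lt_min_iff]
      constructor
      · rintro ⟨⟨a, b⟩, c, d⟩
        refine ⟨⟨a, ?_⟩, b, ?_⟩ <;> linarith
      · rintro ⟨⟨a, b⟩, c, d⟩
        refine ⟨⟨a, c⟩, ?_, ?_⟩ <;> linarith
    rw [this, Real.volume_Ioo, sl, ENNReal.ofReal_max]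
    simp only [ENNReal.ofReal_zero, zero_le, max_eq_right]
    congr 1
    have hA := Real.sqrt_nonneg (ρ^2 - y^2)
    have hB := Real.sqrt_nonneg (s^2 - y^2)
    generalize √(ρ^2 - y^2) = A at *
    generalize √(s^2 - y^2) = B at *
    rcases le_total A B with h | h <;> rcases le_total A (x + B) with h' | h' <;>
      rcases le_total (-A) (x - B) with h'' | h'' <;>
      simp only [min_eq_left, min_eq_right, max_eq_left, max_eq_right, h, h', h''] <;>
      (try rw [min_eq_left (by linarith)]; ring) <;> (try rw [min_eq_right (by linarith)]; ring) <;> (try linarith)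
    all_goals
      first
      | (rw [min_eq_left (by linarith)]; linarith)
      | (rw [min_eq_right (by linarith)]; linarith)
  rw [hv, integral_eq_lintegral_of_nonneg_ae]
  · congr 1
    rw [Measure.volume_eq_prod, Measure.prod_apply_symm hSm]
    exact lintegral_congr hsl
  · exact Filter.Eventually.of_forall fun y => le_max_left _ _
  · apply Continuous.aestronglyMeasurable
    unfold sl
    fun_prop

lemma hsq_eq (ρ s x : ℝ) (hx : 0 < x) :
    4 * x^2 * hsq ρ s x = 4 * ρ^2 * s^2 - (ρ^2 + s^2 - x^2)^2 := by
  unfold hsq; field_simp; ring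

lemma sl_zero (ρ s x y : ℝ) (hx : 0 < x) (h : ρ^2 ≤ y^2 ∨ s^2 ≤ y^2) : sl ρ s x y = 0 := by
  unfold sl
  have hA := Real.sqrt_nonneg (ρ^2 - y^2)
  have hB := Real.sqrt_nonneg (s^2 - y^2)
  apply max_eq_left
  refine (min_le_left _ _).trans ?_
  rcases h with h | h
  · have := Real.sqrt_eq_zero'.2 (sub_nonpos.2 h)
    linarith [min_le_left (√(ρ^2 - y^2)) (√(s^2 - y^2))]
  · have := Real.sqrt_eq_zero'.2 (sub_nonpos.2 h)
    linarith [min_le_right (√(ρ^2 - y^2)) (√(s^2 - y^2))]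

lemma sl_deriv (ρ s x y : ℝ) (hρ : 0 < ρ) (hs : 0 < s) (hx : 0 < x)
    (hy : y^2 ≠ hsq ρ s x) (hy1 : y^2 ≠ ρ^2) (hy2 : y^2 ≠ s^2) :
    HasDerivAt (fun x => sl ρ s x y) (if y^2 < hsq ρ s x then -1 else 0) x := by
  have hE := hsq_eq ρ s x hx
  have hx2 : 0 < x^2 := by positivity
  by_cases hyy : ρ^2 ≤ y^2 ∨ s^2 ≤ y^2
  · have : ¬ y^2 < hsq ρ s x := by
      rcases hyy with h | h
      · intro h'
        nlinarith [sq_nonneg (x^2 + ρ^2 - s^2), mul_pos hx2 (sub_pos.2 (lt_of_le_of_lt h h'))]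
      · intro h'
        nlinarith [sq_nonneg (x^2 + s^2 - ρ^2), mul_pos hx2 (sub_pos.2 (lt_of_le_of_lt h h'))]
    rw [if_neg this]
    refine (hasDerivAt_const x (0:ℝ)).congr_of_eventuallyEq ?_
    filter_upwards [lt_mem_nhds hx] with z hz
    exact sl_zero ρ s z y hz hyy
  push Not at hyy
  have hA : 0 < √(ρ^2 - y^2) := Real.sqrt_pos.2 (by linarith [hyy.1])
  have hB : 0 < √(s^2 - y^2) := Real.sqrt_pos.2 (by linarith [hyy.2])
  have hA2 := Real.sq_sqrt (sub_nonneg.2 hyy.1.le)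
  have hB2 := Real.sq_sqrt (sub_nonneg.2 hyy.2.le)
  unfold sl
  generalize √(ρ^2 - y^2) = A at *
  generalize √(s^2 - y^2) = B at *
  have key : 4 * x^2 * (hsq ρ s x - y^2) = ((A + B)^2 - x^2) * (x^2 - (A - B)^2) := by
    have h1 : ρ^2 = A^2 + y^2 := by linarith
    have h2 : s^2 = B^2 + y^2 := by linarith
    rw [mul_sub, hE, h1, h2]; ring
  have hm : 2 * min A B = A + B - |A - B| := by
    rcases le_total A B with h | h
    · rw [min_eq_left h, abs_of_nonpos (by linarith)]; ring
    · rw [min_eq_right h, abs_of_nonneg (by linarith)]; ring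
  have hD : |A - B| < A + B := by rw [abs_lt]; constructor <;> linarith
  have hDn := abs_nonneg (A - B)
  rw [← sq_abs (A - B)] at key
  rw [hm]
  generalize |A - B| = D at *
  rcases lt_trichotomy x D with h | h | h
  · have : ¬ y^2 < hsq ρ s x := by
      intro h'
      have : 0 < 4 * x^2 * (hsq ρ s x - y^2) := by have := sub_pos.2 h'; positivity
      rw [key] at this
      have h3 : 0 < (A+B)^2 - x^2 := by nlinarith
      nlinarith [pos_of_mul_pos_right this h3.le]
    rw [if_neg this]
    refine (hasDerivAt_const x (A + B - D)).congr_of_eventuallyEq ?_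
    filter_upwards [gt_mem_nhds h] with z hz
    rw [min_eq_left (by linarith), max_eq_right (by linarith)]
  · subst h
    exfalso; apply hy
    have : 4 * x^2 * (hsq ρ s x - y^2) = 0 := by rw [key]; ring
    have := (mul_eq_zero.1 this).resolve_left (by positivity)
    linarith
  rcases lt_trichotomy x (A + B) with h' | h' | h'
  · have : y^2 < hsq ρ s x := by
      have h3 : 0 < (A+B)^2 - x^2 := by nlinarith
      have h4 : 0 < x^2 - D^2 := by nlinarith
      have := mul_pos h3 h4
      rw [← key] at this
      have := pos_of_mul_pos_right this (by positivity)
      linarith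
    rw [if_pos this]
    refine ((hasDerivAt_id x).const_sub (A + B)).congr_of_eventuallyEq ?_
    filter_upwards [gt_mem_nhds h', lt_mem_nhds h] with z hz hz'
    rw [min_eq_right (by linarith), max_eq_right (by linarith)]
    rfl
  · exfalso; apply hy
    have : 4 * x^2 * (hsq ρ s x - y^2) = 0 := by rw [key, ← h']; ring
    have := (mul_eq_zero.1 this).resolve_left (by positivity)
    linarith
  · have : ¬ y^2 < hsq ρ s x := by
      intro h''
      have : 0 < 4 * x^2 * (hsq ρ s x - y^2) := by have := sub_pos.2 h''; positivity
      rw [key] at this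
      have h4 : 0 < x^2 - D^2 := by nlinarith
      nlinarith [pos_of_mul_pos_left this h4.le]
    rw [if_neg this]
    refine (hasDerivAt_const x (0:ℝ)).congr_of_eventuallyEq ?_
    filter_upwards [lt_mem_nhds h'] with z hz
    rw [max_eq_left]
    exact (min_le_right _ _).trans (by linarith)

lemma vol_deriv (ρ s c : ℝ) (hρ : 0 < ρ) (hs : 0 < s) (hc : 0 < c) :
    HasDerivAt (fun x => (volume (ball (0 : EuclideanSpace ℝ (Fin 2)) ρ ∩ ball (pc x) s)).toReal)
      (- (2 * √(hsq ρ s c))) c := by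
  have hcont : ∀ x, Continuous (sl ρ s x) := by intro x; unfold sl; fun_prop
  have hset : ∀ y, (y^2 < hsq ρ s c) ↔ y ∈ Ioo (-√(hsq ρ s c)) (√(hsq ρ s c)) := by
    intro y
    rw [mem_Ioo, ← abs_lt, Real.lt_sqrt (abs_nonneg _), sq_abs]
  have hF' : (fun y => if y^2 < hsq ρ s c then (-1:ℝ) else 0) =
      (Ioo (-√(hsq ρ s c)) (√(hsq ρ s c))).indicator (fun _ => (-1:ℝ)) := by
    ext y; simp only [indicator, hset]
  have hne : ∀ a : ℝ, ∀ᵐ y : ℝ, y^2 ≠ a := by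
    intro a
    have : {y : ℝ | y^2 = a} ⊆ {√a, -√a} := by
      intro y hy
      simp only [mem_setOf_eq] at hy
      subst hy
      rw [Real.sqrt_sq_eq_abs]
      rcases abs_choice y with h | h <;> simp [h]
    have h0 : volume {y : ℝ | y^2 = a} = 0 :=
      measure_mono_null this ((Set.toFinite _).measure_zero _)
    rw [ae_iff]; simpa using h0
  have main := (hasDerivAt_integral_of_dominated_loc_of_lip (μ := volume) (F := sl ρ s)
    (F' := fun y => if y^2 < hsq ρ s c then (-1:ℝ) else 0) (x₀ := c) (s := Ioi 0)
    (bound := (Icc (-ρ) ρ).indicator (fun _ => (1:ℝ))) (Ioi_mem_nhds hc)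
    (Filter.Eventually.of_forall fun x => (hcont x).aestronglyMeasurable)
    ?_ ?_ ?_ ?_ ?_).2
  · have hval : ∫ y, (if y^2 < hsq ρ s c then (-1:ℝ) else 0) = - (2 * √(hsq ρ s c)) := by
      rw [hF', integral_indicator measurableSet_Ioo]
      have := Real.sqrt_nonneg (hsq ρ s c)
      simp
      ring
    rw [hval] at main
    refine main.congr_of_eventuallyEq ?_
    filter_upwards [lt_mem_nhds hc] with z hz
    exact vol_slice ρ s z hρ hs hz
  · apply (hcont c).integrable_of_hasCompactSupport
    apply HasCompactSupport.intro (K := Icc (-ρ) ρ) isCompact_Icc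
    intro y hy
    apply sl_zero _ _ _ _ hc
    left
    rw [mem_Icc, ← abs_le, not_le] at hy
    exact (sq_lt_sq.2 (by rwa [abs_of_pos hρ])).le
  · rw [hF']
    exact (measurable_const.indicator measurableSet_Ioo).aestronglyMeasurable
  · refine Filter.Eventually.of_forall fun y => ?_
    rw [lipschitzOnWith_iff_dist_le_mul]
    intro a ha b hb
    by_cases hy : y ∈ Icc (-ρ) ρ
    · simp only [indicator_of_mem hy, sl, Real.dist_eq]
      simp only [Real.coe_nnabs, abs_one, one_mul]
      generalize 2 * min (√(ρ^2 - y^2)) (√(s^2 - y^2)) = m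
      generalize √(ρ^2 - y^2) + √(s^2 - y^2) = T
      calc _ ≤ max |(0:ℝ) - 0| |min m (T - a) - min m (T - b)| := abs_max_sub_max_le_max _ _ _ _
        _ = |min m (T - a) - min m (T - b)| := by simp
        _ ≤ max |m - m| |(T - a) - (T - b)| := abs_min_sub_min_le_max _ _ _ _
        _ = |a - b| := by
          simp only [sub_self, abs_zero, sub_sub_sub_cancel_left]
          rw [max_eq_right (abs_nonneg _), abs_sub_comm]
    · have hy2 : ρ^2 ≤ y^2 := by
        rw [mem_Icc, ← abs_le, not_le] at hy
        exact (sq_lt_sq.2 (by rwa [abs_of_pos hρ])).le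
      rw [sl_zero _ _ _ _ ha (Or.inl hy2), sl_zero _ _ _ _ hb (Or.inl hy2)]
      simp only [dist_self]; positivity
  · exact (integrable_indicator_iff measurableSet_Icc).2 (by simp)
  · filter_upwards [hne (hsq ρ s c), hne (ρ^2), hne (s^2)] with y h1 h2 h3
    exact sl_deriv ρ s c y hρ hs hc h1 h2 h3

lemma gamma_deriv (R Q s c : ℝ) (hR : 0 < R) (hRQ : R < Q) (hs : 0 < s)
    (hc : 0 < c) (γ : ℝ → ℝ)
    (hγ : ∀ x, γ x =
      (volume ({p : EuclideanSpace ℝ (Fin 2) | R ≤ ‖p‖ ∧ ‖p‖ ≤ Q} ∩ ball (pc x) s)).toReal) :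
    deriv γ c = 2 * (√(hsq R s c) - √(hsq Q s c)) := by
  have h := (vol_deriv Q s c (hR.trans hRQ) hs hc).sub (vol_deriv R s c hR hs hc)
  rw [show 2 * (√(hsq R s c) - √(hsq Q s c)) = - (2 * √(hsq Q s c)) - -(2 * √(hsq R s c)) by ring,
    ← h.deriv]
  congr 1
  ext x
  rw [hγ]
  simp only [Pi.sub_apply]
  have hsub : ball (0 : EuclideanSpace ℝ (Fin 2)) R ∩ ball (pc x) s ⊆
      ball (0 : EuclideanSpace ℝ (Fin 2)) Q ∩ ball (pc x) s :=
    inter_subset_inter_left _ (ball_subset_ball hRQ.le)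
  have hfin : volume (ball (0 : EuclideanSpace ℝ (Fin 2)) R ∩ ball (pc x) s) ≠ ⊤ :=
    ((measure_mono inter_subset_left).trans_lt measure_ball_lt_top).ne
  have hfin' : volume (ball (0 : EuclideanSpace ℝ (Fin 2)) Q ∩ ball (pc x) s) ≠ ⊤ :=
    ((measure_mono inter_subset_left).trans_lt measure_ball_lt_top).ne
  rw [← ENNReal.toReal_sub_of_le (measure_mono hsub) hfin', ← measure_diff hsub
    (measurableSet_ball.inter measurableSet_ball).nullMeasurableSet hfin]
  congr 1
  apply measure_congr
  have hsph : ∀ᵐ p : EuclideanSpace ℝ (Fin 2), ‖p‖ ≠ Q := by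
    have := Measure.addHaar_sphere (volume : Measure (EuclideanSpace ℝ (Fin 2))) 0 Q
    rw [ae_iff]
    convert this using 2
    ext p; simp
  filter_upwards [hsph] with p hp
  apply propext
  change ((R ≤ ‖p‖ ∧ ‖p‖ ≤ Q) ∧ p ∈ ball (pc x) s) ↔
    ((p ∈ ball 0 Q ∧ p ∈ ball (pc x) s) ∧ ¬ (p ∈ ball 0 R ∧ p ∈ ball (pc x) s))
  rw [mem_ball_zero_iff, mem_ball_zero_iff]
  have : ‖p‖ ≤ Q ↔ ‖p‖ < Q := ⟨fun h => lt_of_le_of_ne h hp, le_of_lt⟩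
  rw [this, ← not_lt]
  tauto

/-- With `γ c = vol(A_{R,Q} ∩ B((c,0),s))`, if `0 < c ≤ c'` both lie in the
region where the ball meets both boundary circles, and `γ' c > 0` and `γ' c' > 0`, then
`γ' c ≥ γ' c'`. -/
theorem gamma_deriv_antitone
    (R Q s c c' : ℝ) (hR : 0 < R) (hRQ : R < Q) (hs : 0 < s)
    (hc : 0 < c) (hcc' : c ≤ c')
    (h1 : Q < c + s) (h2 : s - c < R) (h3 : c - s < R)
    (h1' : Q < c' + s) (h2' : s - c' < R) (h3' : c' - s < R)
    (γ : ℝ → ℝ)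
    (hγ : ∀ x, γ x =
      (volume ({p : EuclideanSpace ℝ (Fin 2) | R ≤ ‖p‖ ∧ ‖p‖ ≤ Q} ∩ ball (pc x) s)).toReal)
    (hpos : 0 < deriv γ c) (hpos' : 0 < deriv γ c') :
    deriv γ c' ≤ deriv γ c := by
  have hQ := hR.trans hRQ
  have hc' : 0 < c' := hc.trans_le hcc'
  have g1 := gamma_deriv R Q s c hR hRQ hs hc γ hγ
  have g2 := gamma_deriv R Q s c' hR hRQ hs hc' γ hγ
  rw [g1] at hpos ⊢
  rw [g2] at hpos' ⊢
  have pos : ∀ ρ x, 0 < ρ → 0 < x → x < ρ + s → s < ρ + x → ρ < x + s → 0 < hsq ρ s x := by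
    intro ρ x hρ hx a1 a2 a3
    have hE := hsq_eq ρ s x hx
    have : 4 * ρ^2 * s^2 - (ρ^2 + s^2 - x^2)^2 =
      (ρ + s + x) * (ρ + s - x) * ((x + ρ - s) * (x + s - ρ)) := by ring
    have h0 : 0 < (ρ + s + x) * (ρ + s - x) * ((x + ρ - s) * (x + s - ρ)) :=
      mul_pos (mul_pos (by linarith) (by linarith)) (mul_pos (by linarith) (by linarith))
    rw [← this, ← hE] at h0
    exact pos_of_mul_pos_right h0 (by positivity)
  have p1 := pos R c hR hc (by linarith) (by linarith) (by linarith)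
  have p2 := pos Q c hQ hc (by linarith) (by linarith) (by linarith)
  have p1' := pos R c' hR hc' (by linarith) (by linarith) (by linarith)
  have p2' := pos Q c' hQ hc' (by linarith) (by linarith) (by linarith)
  have diff : ∀ x, 0 < x → hsq R s x - hsq Q s x =
      (Q^2 - R^2) * ((R^2 + Q^2 - 2 * s^2) / x^2 - 2) / 4 := by
    intro x hx; unfold hsq; field_simp; ring
  have hRQ2 : 0 < Q^2 - R^2 := by nlinarith
  have hN' : 0 < hsq R s c' - hsq Q s c' := by
    have : √(hsq Q s c') < √(hsq R s c') := by linarith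
    have := (Real.sqrt_lt_sqrt_iff p2'.le).1 this
    linarith
  have hK : 2 < (R^2 + Q^2 - 2 * s^2) / c'^2 := by
    rw [diff c' hc'] at hN'
    have h4 : 0 < (Q^2 - R^2) * ((R^2 + Q^2 - 2 * s^2) / c'^2 - 2) := by linarith
    have := pos_of_mul_pos_right h4 hRQ2.le
    linarith
  rw [lt_div_iff₀ (by positivity)] at hK
  have hcc2 : c^2 ≤ c'^2 := by nlinarith
  have hc2 : 0 < c^2 := by positivity
  have hNle : hsq R s c' - hsq Q s c' ≤ hsq R s c - hsq Q s c := by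
    rw [diff c hc, diff c' hc']
    have : (R^2 + Q^2 - 2 * s^2) / c'^2 ≤ (R^2 + Q^2 - 2 * s^2) / c^2 :=
      div_le_div_of_nonneg_left (by nlinarith) hc2 hcc2
    nlinarith
  have hQle : hsq Q s c ≤ hsq Q s c' := by
    have e : hsq Q s c' - hsq Q s c =
        (c'^2 - c^2) * ((Q^2 - s^2)^2 - c^2 * c'^2) / (4 * c^2 * c'^2) := by
      unfold hsq; field_simp; ring
    have hk : c'^2 ≤ Q^2 - s^2 := by linarith
    have h5 : 0 ≤ (Q^2 - s^2)^2 - c^2 * c'^2 := by nlinarith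
    have h6 : 0 ≤ c'^2 - c^2 := by linarith
    have : 0 ≤ hsq Q s c' - hsq Q s c := by rw [e]; positivity
    linarith
  have q1 := Real.sq_sqrt p1.le
  have q2 := Real.sq_sqrt p2.le
  have q1' := Real.sq_sqrt p1'.le
  have q2' := Real.sq_sqrt p2'.le
  have r1 := Real.sqrt_pos.2 p1
  have r2 := Real.sqrt_pos.2 p2
  have hQs := Real.sqrt_le_sqrt hQle
  rw [← q1, ← q2, ← q1', ← q2'] at hNle
  generalize √(hsq R s c) = a at *
  generalize √(hsq Q s c) = b at *
  generalize √(hsq R s c') = a' at *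
  generalize √(hsq Q s c') = b' at *
  rcases le_total a' a with h | h
  · linarith
  · by_contra hcon
    push Not at hcon
    have h7 : a - b < a' - b' := by linarith
    have h8 : 0 < a - b := by linarith
    have h9 : a + b ≤ a' + b' := by linarith
    nlinarith [mul_lt_mul'' h7 (lt_of_le_of_ne h9 (by intro h; linarith)) h8.le (by linarith)]
end

section
/- Fix 0 < R < Q and s > 0, and suppose c > 0 satisfies c + s > Q, s − c < R, and c − s < R. For r ∈ {R,Q} define y_r(c) to be the maximum of the second coordinates of points of C(O,r) ∩ C(p_c,s) (these intersections are nonempty under the hypotheses). Then: y_R(c) = y_Q(c) if and only if c² + s² = (R² + Q²)/2; y_R(c) > y_Q(c) if and only if c² + s² < (R² + Q²)/2; and y_R(c) < y_Q(c) if and only if c² + s² > (R² + Q²)/2. -/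
open Set Metric

theorem y_spec (r s c y : ℝ) (hr : 0 < r) (hs : 0 < s) (hc : 0 < c)
    (h1 : r < c + s) (h2 : s - c < r) (h3 : c - s < r)
    (hy : y = sSup ((fun p : EuclideanSpace ℝ (Fin 2) => p 1) ''
      (sphere (0 : EuclideanSpace ℝ (Fin 2)) r ∩ sphere (pc c) s))) :
    0 ≤ y ∧ 4 * c ^ 2 * y ^ 2 = 4 * c ^ 2 * r ^ 2 - (c ^ 2 + r ^ 2 - s ^ 2) ^ 2 := by
  have hmem : ∀ p : EuclideanSpace ℝ (Fin 2),
      p ∈ sphere (0 : EuclideanSpace ℝ (Fin 2)) r ∩ sphere (pc c) s ↔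
      (p 0 ^ 2 + p 1 ^ 2 = r ^ 2 ∧ (p 0 - c) ^ 2 + p 1 ^ 2 = s ^ 2) := by
    intro p
    rw [mem_inter_iff, mem_sphere, mem_sphere, EuclideanSpace.dist_eq, EuclideanSpace.dist_eq,
      Real.sqrt_eq_iff_eq_sq (by positivity) hr.le, Real.sqrt_eq_iff_eq_sq (by positivity) hs.le]
    simp [Fin.sum_univ_two, pc, Real.dist_eq, sq_abs]
  set x : ℝ := (c ^ 2 + r ^ 2 - s ^ 2) / (2 * c) with hx
  have hxc : 2 * c * x = c ^ 2 + r ^ 2 - s ^ 2 := by rw [hx]; field_simp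
  have hpos : 0 ≤ 4 * c ^ 2 * r ^ 2 - (c ^ 2 + r ^ 2 - s ^ 2) ^ 2 := by
    have e : 4 * c ^ 2 * r ^ 2 - (c ^ 2 + r ^ 2 - s ^ 2) ^ 2
      = ((r - (s - c)) * (c + s + r)) * ((c + s - r) * (r - (c - s))) := by ring
    rw [e]
    have a1 := sub_pos.2 h1
    have a2 := sub_pos.2 h2
    have a3 := sub_pos.2 h3
    positivity
  have hnn : 0 ≤ r ^ 2 - x ^ 2 := by
    have : 0 ≤ (4 * c ^ 2) * (r ^ 2 - x ^ 2) := by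
      rw [← hxc] at hpos; linarith [hpos]
    exact nonneg_of_mul_nonneg_right this (by positivity)
  have hsq := Real.sq_sqrt hnn
  have hgr : IsGreatest ((fun p : EuclideanSpace ℝ (Fin 2) => p 1) ''
      (sphere (0 : EuclideanSpace ℝ (Fin 2)) r ∩ sphere (pc c) s)) (√(r ^ 2 - x ^ 2)) := by
    constructor
    · refine ⟨!₂[x, √(r ^ 2 - x ^ 2)], (hmem _).2 ⟨?_, ?_⟩, ?_⟩
      · simp [hsq]
      · simp [hsq]; linarith
      · simp
    · rintro _ ⟨p, hp, rfl⟩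
      obtain ⟨ha, hb⟩ := (hmem p).1 hp
      have hp0 : p 0 = x := by
        have : 2 * c * p 0 = 2 * c * x := by rw [hxc]; linarith
        exact mul_left_cancel₀ (by positivity) this
      apply Real.le_sqrt_of_sq_le
      rw [← hp0]; linarith
  rw [hy, hgr.csSup_eq]
  refine ⟨Real.sqrt_nonneg _, ?_⟩
  rw [hsq, ← hxc]; ring

/-- Under the hypotheses `c + s > Q`, `s - c < R`, `c - s < R`, the maximal
second coordinates `y_R`, `y_Q` of the intersections `C(O,R) ∩ C((c,0),s)` and
`C(O,Q) ∩ C((c,0),s)` compare to each other exactly as `c² + s²` compares to `(R² + Q²)/2`. -/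
theorem yR_yQ_comparison
    (R Q s c : ℝ) (hR : 0 < R) (hRQ : R < Q) (hs : 0 < s) (hc : 0 < c)
    (h1 : Q < c + s) (h2 : s - c < R) (h3 : c - s < R)
    (yR yQ : ℝ)
    (hyR : yR = sSup ((fun p : EuclideanSpace ℝ (Fin 2) => p 1) ''
      (sphere (0 : EuclideanSpace ℝ (Fin 2)) R ∩ sphere (pc c) s)))
    (hyQ : yQ = sSup ((fun p : EuclideanSpace ℝ (Fin 2) => p 1) ''
      (sphere (0 : EuclideanSpace ℝ (Fin 2)) Q ∩ sphere (pc c) s))) :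
    (yR = yQ ↔ c ^ 2 + s ^ 2 = (R ^ 2 + Q ^ 2) / 2) ∧
    (yQ < yR ↔ c ^ 2 + s ^ 2 < (R ^ 2 + Q ^ 2) / 2) ∧
    (yR < yQ ↔ (R ^ 2 + Q ^ 2) / 2 < c ^ 2 + s ^ 2) := by
  obtain ⟨pR, eR⟩ := y_spec R s c yR hR hs hc (by linarith) h2 h3 hyR
  obtain ⟨pQ, eQ⟩ := y_spec Q s c yQ (by linarith) hs hc h1 (by linarith) (by linarith) hyQ
  have hD : 0 < Q ^ 2 - R ^ 2 := by nlinarith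
  have hC : 0 < 4 * c ^ 2 := by positivity
  have key : (4 * c ^ 2) * (yQ ^ 2 - yR ^ 2)
      = (Q ^ 2 - R ^ 2) * (2 * (c ^ 2 + s ^ 2) - (R ^ 2 + Q ^ 2)) := by
    linear_combination eQ - eR
  have l1 : yQ < yR → c ^ 2 + s ^ 2 < (R ^ 2 + Q ^ 2) / 2 := by
    intro h
    have a : yQ ^ 2 - yR ^ 2 < 0 := by nlinarith
    have b := mul_neg_of_pos_of_neg hC a
    rw [key] at b
    linarith [neg_of_mul_neg_right b hD.le]
  have l2 : yR < yQ → (R ^ 2 + Q ^ 2) / 2 < c ^ 2 + s ^ 2 := by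
    intro h
    have a : 0 < yQ ^ 2 - yR ^ 2 := by nlinarith
    have b := mul_pos hC a
    rw [key] at b
    linarith [pos_of_mul_pos_right b hD.le]
  have l3 : yR = yQ → c ^ 2 + s ^ 2 = (R ^ 2 + Q ^ 2) / 2 := by
    intro h
    rw [h, sub_self, mul_zero] at key
    rcases mul_eq_zero.1 key.symm with h | h <;> linarith
  rcases lt_trichotomy yR yQ with h | h | h
  · have := l2 h
    refine ⟨⟨l3, fun _ => ?_⟩, ⟨l1, fun _ => ?_⟩, ⟨l2, fun _ => h⟩⟩ <;> linarith
  · have := l3 h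
    refine ⟨⟨l3, fun _ => h⟩, ⟨l1, fun _ => ?_⟩, ⟨l2, fun _ => ?_⟩⟩ <;> linarith
  · have := l1 h
    refine ⟨⟨l3, fun _ => ?_⟩, ⟨l1, fun _ => h⟩, ⟨l2, fun _ => ?_⟩⟩ <;> linarith
end

section
/- Fix 0 < s < Q, and define y_Q(c) for c > 0 to be the maximum of the second coordinates of points of C(O,Q) ∩ C(p_c,s) if this intersection is nonempty, and 0 otherwise. Then y_Q is strictly increasing on the interval [Q − s, √(Q² − s²)]. -/
open Set Metric
open scoped Classical

theorem mem_inter_iff_aux (Q s c : ℝ) (hQ : 0 ≤ Q) (hs : 0 ≤ s)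
    (p : EuclideanSpace ℝ (Fin 2)) :
    p ∈ sphere (0 : EuclideanSpace ℝ (Fin 2)) Q ∩ sphere (pc c) s ↔
      p 0 ^ 2 + p 1 ^ 2 = Q ^ 2 ∧ (p 0 - c) ^ 2 + p 1 ^ 2 = s ^ 2 := by
  have h0 : pc c 0 = c := by simp [pc]
  have h1 : pc c 1 = 0 := by simp [pc]
  rw [mem_inter_iff, mem_sphere, mem_sphere, EuclideanSpace.dist_eq, EuclideanSpace.dist_eq,
    Real.sqrt_eq_iff_eq_sq (by positivity) hQ, Real.sqrt_eq_iff_eq_sq (by positivity) hs]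
  simp [Fin.sum_univ_two, Real.dist_eq, sq_abs, h0, h1]

theorem yQ_closed_form (Q s c : ℝ) (hs : 0 < s) (hsQ : s < Q) (hc : 0 < c)
    (hx : ((c ^ 2 + Q ^ 2 - s ^ 2) / (2 * c)) ^ 2 ≤ Q ^ 2) :
    IsGreatest ((fun p : EuclideanSpace ℝ (Fin 2) => p 1) ''
          (sphere (0 : EuclideanSpace ℝ (Fin 2)) Q ∩ sphere (pc c) s))
      (Real.sqrt (Q ^ 2 - ((c ^ 2 + Q ^ 2 - s ^ 2) / (2 * c)) ^ 2)) := by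
  have hxc : ((c ^ 2 + Q ^ 2 - s ^ 2) / (2 * c)) * (2 * c) = c ^ 2 + Q ^ 2 - s ^ 2 := by
    field_simp
  set x := (c ^ 2 + Q ^ 2 - s ^ 2) / (2 * c) with hxdef
  have hQ : 0 ≤ Q := by linarith
  constructor
  · refine ⟨!₂[x, Real.sqrt (Q ^ 2 - x ^ 2)], ?_, by simp⟩
    rw [mem_inter_iff_aux Q s c hQ hs.le]
    have := Real.sq_sqrt (sub_nonneg.2 hx)
    constructor
    · simp [this]
    · simp [this]; linarith
  · rintro _ ⟨p, hp, rfl⟩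
    rw [mem_inter_iff_aux Q s c hQ hs.le] at hp
    obtain ⟨h1, h2⟩ := hp
    have hpx : p 0 = x := by
      rw [hxdef, eq_div_iff (by positivity)]
      linarith
    apply Real.le_sqrt_of_sq_le
    rw [← hpx]
    linarith

/-- For `0 < s < Q`, the function `y_Q`, sending `c` to the maximal second
coordinate of a point of `C(O,Q) ∩ C((c,0),s)` (or `0` if the intersection is empty), is
strictly increasing on `[Q - s, √(Q² - s²)]`. -/
theorem yQ_strictMonoOn
    (Q s : ℝ) (hs : 0 < s) (hsQ : s < Q)
    (yQ : ℝ → ℝ)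
    (hyQ : ∀ c, yQ c =
      if (sphere (0 : EuclideanSpace ℝ (Fin 2)) Q ∩ sphere (pc c) s).Nonempty then
        sSup ((fun p : EuclideanSpace ℝ (Fin 2) => p 1) ''
          (sphere (0 : EuclideanSpace ℝ (Fin 2)) Q ∩ sphere (pc c) s))
      else 0) :
    StrictMonoOn yQ (Icc (Q - s) (Real.sqrt (Q ^ 2 - s ^ 2))) := by
  have key : ∀ c ∈ Icc (Q - s) (Real.sqrt (Q ^ 2 - s ^ 2)), 0 < c ∧ c ^ 2 ≤ Q ^ 2 - s ^ 2 ∧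
      ((c ^ 2 + Q ^ 2 - s ^ 2) / (2 * c)) ^ 2 ≤ Q ^ 2 ∧
      yQ c = Real.sqrt (Q ^ 2 - ((c ^ 2 + Q ^ 2 - s ^ 2) / (2 * c)) ^ 2) := by
    rintro c ⟨h1, h2⟩
    have hc : 0 < c := by linarith
    have hD : 0 ≤ Q ^ 2 - s ^ 2 := by nlinarith
    have hc2 : c ^ 2 ≤ Q ^ 2 - s ^ 2 := (Real.le_sqrt hc.le hD).1 h2
    have hcQ : c ≤ Q := by nlinarith
    have hx : ((c ^ 2 + Q ^ 2 - s ^ 2) / (2 * c)) ^ 2 ≤ Q ^ 2 := by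
      apply pow_le_pow_left₀
      · apply div_nonneg <;> nlinarith
      · rw [div_le_iff₀ (by positivity)]
        nlinarith
    have hg := yQ_closed_form Q s c hs hsQ hc hx
    refine ⟨hc, hc2, hx, ?_⟩
    rw [hyQ, if_pos hg.nonempty.of_image, hg.csSup_eq]
  intro a ha b hb hab
  obtain ⟨ha0, ha2, hax, hay⟩ := key a ha
  obtain ⟨hb0, hb2, hbx, hby⟩ := key b hb
  rw [hay, hby]
  apply Real.sqrt_lt_sqrt (by linarith)
  apply sub_lt_sub_left
  apply pow_lt_pow_left₀ _ _ (by norm_num)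
  · rw [div_lt_div_iff₀ (by positivity) (by positivity)]
    have h : 0 < (b - a) * (Q ^ 2 - s ^ 2 - a * b) :=
      mul_pos (by linarith) (by nlinarith)
    nlinarith
  · apply div_nonneg <;> nlinarith
end

section
/- Fix 0 < R < Q, and let μ₀ be the measure on the Euclidean plane with density f with respect to 2-dimensional Lebesgue measure, where f(p) = 1/(π(Q²−R²)) if R ≤ ‖p‖ ≤ Q and f(p) = 0 otherwise. For s > 0 define ν̃_s : [R,Q] → [0,1] by ν̃_s(c) = μ₀(B(p_c,s)). Then for every s > 0 there exists ω ∈ [R,Q] such that ν̃_s is non-decreasing on [R,ω] and non-increasing on [ω,Q]. -/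
open Set MeasureTheory Metric

/-- The intersection of the disc of radius `s` about `(c,0)` with the disc of radius `r`. -/
def lensSet (s r c : ℝ) : Set (ℝ × ℝ) :=
  {p | (p.1 - c) ^ 2 + p.2 ^ 2 < s ^ 2 ∧ p.1 ^ 2 + p.2 ^ 2 < r ^ 2}

/-- The region swept by the common chords, for centres between `a` and `c`. -/
def chordSet (s r a c : ℝ) : Set (ℝ × ℝ) :=
  {p | a < p.1 ∧ p.1 < c ∧
    4 * p.1 ^ 2 * p.2 ^ 2 < 4 * p.1 ^ 2 * r ^ 2 - (p.1 ^ 2 + r ^ 2 - s ^ 2) ^ 2}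

lemma measurableSet_lensSet (s r c : ℝ) : MeasurableSet (lensSet s r c) :=
  (measurableSet_lt (f := fun p : ℝ × ℝ => (p.1 - c) ^ 2 + p.2 ^ 2) (g := fun _ => s ^ 2)
    (by fun_prop) (by fun_prop)).inter
  (measurableSet_lt (f := fun p : ℝ × ℝ => p.1 ^ 2 + p.2 ^ 2) (g := fun _ => r ^ 2)
    (by fun_prop) (by fun_prop))

lemma measurableSet_chordSet (s r a c : ℝ) : MeasurableSet (chordSet s r a c) := by
  have h1 : MeasurableSet {p : ℝ × ℝ | a < p.1} := measurableSet_lt (by fun_prop) (by fun_prop)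
  have h2 : MeasurableSet {p : ℝ × ℝ | p.1 < c} := measurableSet_lt (by fun_prop) (by fun_prop)
  have h3 : MeasurableSet {p : ℝ × ℝ | 4 * p.1 ^ 2 * p.2 ^ 2 <
      4 * p.1 ^ 2 * r ^ 2 - (p.1 ^ 2 + r ^ 2 - s ^ 2) ^ 2} :=
    measurableSet_lt (by fun_prop) (by fun_prop)
  have h : chordSet s r a c = {p : ℝ × ℝ | a < p.1} ∩ ({p : ℝ × ℝ | p.1 < c} ∩
      {p : ℝ × ℝ | 4 * p.1 ^ 2 * p.2 ^ 2 <
        4 * p.1 ^ 2 * r ^ 2 - (p.1 ^ 2 + r ^ 2 - s ^ 2) ^ 2}) := by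
    ext p
    simp only [chordSet, mem_ofPred_eq, mem_inter_iff]
  rw [h]
  exact h1.inter (h2.inter h3)

lemma lens_slice (s r c y : ℝ) :
    (fun x => (x, y)) ⁻¹' lensSet s r c =
      Ioo (max (c - √(s ^ 2 - y ^ 2)) (-√(r ^ 2 - y ^ 2)))
        (min (c + √(s ^ 2 - y ^ 2)) (√(r ^ 2 - y ^ 2))) := by
  ext x
  have h1 : (x - c) ^ 2 + y ^ 2 < s ^ 2 ↔ |x - c| < √(s ^ 2 - y ^ 2) := by
    rw [Real.lt_sqrt (abs_nonneg _), sq_abs]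
    constructor <;> intro h <;> linarith
  have h2 : x ^ 2 + y ^ 2 < r ^ 2 ↔ |x| < √(r ^ 2 - y ^ 2) := by
    rw [Real.lt_sqrt (abs_nonneg _), sq_abs]
    constructor <;> intro h <;> linarith
  simp only [lensSet, mem_preimage, mem_ofPred_eq, h1, h2, abs_lt, mem_Ioo, max_lt_iff, lt_min_iff]
  constructor
  · rintro ⟨⟨_, _⟩, _, _⟩
    refine ⟨⟨?_, ?_⟩, ?_, ?_⟩ <;> linarith
  · rintro ⟨⟨_, _⟩, _, _⟩
    refine ⟨⟨?_, ?_⟩, ?_, ?_⟩ <;> linarith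

lemma triangle_iff (s r t y : ℝ) (ht : 0 < t) :
    4 * t ^ 2 * y ^ 2 < 4 * t ^ 2 * r ^ 2 - (t ^ 2 + r ^ 2 - s ^ 2) ^ 2 ↔
      |t - √(s ^ 2 - y ^ 2)| < √(r ^ 2 - y ^ 2) ∧
        √(r ^ 2 - y ^ 2) < t + √(s ^ 2 - y ^ 2) := by
  have ht2 : 0 < t ^ 2 := by positivity
  rcases le_or_gt (r ^ 2) (y ^ 2) with hr | hr
  · have : √(r ^ 2 - y ^ 2) = 0 := Real.sqrt_eq_zero_of_nonpos (by linarith)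
    rw [this]
    constructor
    · intro h
      nlinarith [sq_nonneg (t ^ 2 + r ^ 2 - s ^ 2), mul_le_mul_of_nonneg_left hr ht2.le]
    · rintro ⟨h, _⟩
      exact absurd h (not_lt.2 (abs_nonneg _))
  rcases le_or_gt (s ^ 2) (y ^ 2) with hs | hs
  · have : √(s ^ 2 - y ^ 2) = 0 := Real.sqrt_eq_zero_of_nonpos (by linarith)
    rw [this]
    constructor
    · intro h
      nlinarith [sq_nonneg (t ^ 2 + s ^ 2 - r ^ 2), mul_le_mul_of_nonneg_left hs ht2.le]
    · rintro ⟨h, h'⟩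
      have := le_abs_self (t - 0)
      linarith
  have hg := Real.sq_sqrt (sub_nonneg.2 hr.le)
  have hw := Real.sq_sqrt (sub_nonneg.2 hs.le)
  have hg0 : 0 < √(r ^ 2 - y ^ 2) := Real.sqrt_pos.2 (by linarith)
  have hw0 : 0 < √(s ^ 2 - y ^ 2) := Real.sqrt_pos.2 (by linarith)
  set g := √(r ^ 2 - y ^ 2)
  set w := √(s ^ 2 - y ^ 2)
  have e1 : |t - w| < g ↔ (t - w) ^ 2 < g ^ 2 := by
    rw [← sq_abs (t - w)]
    exact (sq_lt_sq₀ (abs_nonneg _) hg0.le).symm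
  have e2 : g < t + w ↔ g ^ 2 < (t + w) ^ 2 := (sq_lt_sq₀ hg0.le (by positivity)).symm
  have e3 : 4 * t ^ 2 * y ^ 2 < 4 * t ^ 2 * r ^ 2 - (t ^ 2 + r ^ 2 - s ^ 2) ^ 2 ↔
      (g ^ 2 - t ^ 2 - w ^ 2) ^ 2 < (2 * t * w) ^ 2 := by
    have : (2 * t * w) ^ 2 = 4 * t ^ 2 * w ^ 2 := by ring
    rw [this, hg, hw]
    constructor <;> intro h <;> nlinarith
  rw [e1, e2, e3, sq_lt_sq, abs_of_pos (a := 2 * t * w) (by positivity), abs_lt]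
  constructor
  · rintro ⟨h1, h2⟩
    constructor <;> nlinarith
  · rintro ⟨h1, h2⟩
    constructor <;> nlinarith

lemma chord_slice (s r a c y : ℝ) (ha : 0 < a) :
    (fun x => (x, y)) ⁻¹' chordSet s r a c =
      Ioo (max a |√(r ^ 2 - y ^ 2) - √(s ^ 2 - y ^ 2)|)
        (min c (√(r ^ 2 - y ^ 2) + √(s ^ 2 - y ^ 2))) := by
  ext x
  simp only [chordSet, mem_preimage, mem_ofPred_eq, mem_Ioo, max_lt_iff, lt_min_iff]
  constructor
  · rintro ⟨h1, h2, h3⟩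
    rw [triangle_iff _ _ _ _ (ha.trans h1), abs_lt] at h3
    obtain ⟨⟨_, _⟩, _⟩ := h3
    refine ⟨⟨h1, abs_lt.2 ⟨?_, ?_⟩⟩, h2, ?_⟩ <;> linarith
  · rintro ⟨⟨h1, h2⟩, h3, h4⟩
    rw [triangle_iff _ _ _ _ (ha.trans h1), abs_lt]
    rw [abs_lt] at h2
    obtain ⟨_, _⟩ := h2
    refine ⟨h1, h3, ⟨?_, ?_⟩, ?_⟩ <;> linarith

lemma slice_identity (a c g w : ℝ) (ha : 0 < a) (hac : a ≤ c) (hg : 0 ≤ g) (hw : 0 ≤ w) :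
    max (min (a + w) g - max (a - w) (-g)) 0 =
      max (min (c + w) g - max (c - w) (-g)) 0 + max (min c (g + w) - max a |g - w|) 0 := by
  have hi : ∀ z : ℝ, 0 < z → max (min (z + w) g - max (z - w) (-g)) 0 =
      2 * min g w - (max |g - w| (min z (g + w)) - |g - w|) := by
    intro z hz
    rcases abs_cases (g - w) with ⟨h, h'⟩ | ⟨h, h'⟩ <;> rw [h] <;>
    rcases max_cases (z - w) (-g) with ⟨h1, _⟩ | ⟨h1, _⟩ <;> rw [h1] <;>
    rcases min_cases (z + w) g with ⟨h2, _⟩ | ⟨h2, _⟩ <;> rw [h2] <;>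
    rcases min_cases z (g + w) with ⟨h3, _⟩ | ⟨h3, _⟩ <;> rw [h3] <;>
    rcases min_cases g w with ⟨h4, _⟩ | ⟨h4, _⟩ <;> rw [h4] <;>
    first
    | (rw [max_eq_left (by linarith)]
       first
       | (rw [max_eq_left (by linarith)]; linarith)
       | (rw [max_eq_right (by linarith)]; linarith))
    | (rw [max_eq_right (by linarith)]
       first
       | (rw [max_eq_left (by linarith)]; linarith)
       | (rw [max_eq_right (by linarith)]; linarith))
  rw [hi a ha, hi c (ha.trans_le hac)]
  have hd : |g - w| ≤ g + w := by rw [abs_le]; constructor <;> linarith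
  generalize |g - w| = d at *
  generalize g + w = e at *
  grind

lemma lens_volume_add (s r a c : ℝ) (ha : 0 < a) (hac : a ≤ c) :
    volume (lensSet s r a) = volume (lensSet s r c) + volume (chordSet s r a c) := by
  rw [Measure.volume_eq_prod, Measure.prod_apply_symm (measurableSet_lensSet _ _ _),
    Measure.prod_apply_symm (measurableSet_lensSet _ _ _),
    Measure.prod_apply_symm (measurableSet_chordSet _ _ _ _),
    ← lintegral_add_left (measurable_measure_prodMk_right (measurableSet_lensSet _ _ _))]
  congr 1
  ext1 y
  rw [lens_slice, lens_slice, chord_slice _ _ _ _ _ ha, Real.volume_Ioo, Real.volume_Ioo,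
    Real.volume_Ioo]
  have key : ∀ x : ℝ, ENNReal.ofReal x = ENNReal.ofReal (max x 0) := by
    intro x
    rcases le_total x 0 with h | h
    · rw [max_eq_right h, ENNReal.ofReal_of_nonpos h, ENNReal.ofReal_zero]
    · rw [max_eq_left h]
  rw [key, key (min (c + _) _ - _), key (min c _ - _),
    ← ENNReal.ofReal_add (le_max_right _ _) (le_max_right _ _),
    slice_identity a c _ _ ha hac (Real.sqrt_nonneg _) (Real.sqrt_nonneg _)]

/-- The measurable equivalence of the Euclidean plane with `ℝ × ℝ`. -/
noncomputable def planeEquiv : EuclideanSpace ℝ (Fin 2) ≃ᵐ ℝ × ℝ :=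
  (MeasurableEquiv.toLp 2 (Fin 2 → ℝ)).symm.trans MeasurableEquiv.finTwoArrow

lemma planeEquiv_mp : MeasurePreserving planeEquiv volume volume :=
  (volume_preserving_finTwoArrow ℝ).comp (PiLp.volume_preserving_ofLp (Fin 2))

lemma lens_eq_s10 (s r c : ℝ) (hs : 0 < s) (hr : 0 < r) :
    ball (pc c) s ∩ ball 0 r = planeEquiv ⁻¹' lensSet s r c := by
  ext p
  have e : planeEquiv p = (p 0, p 1) := rfl
  have h0 : pc c 0 = c := rfl
  have h1 : pc c 1 = 0 := rfl
  rw [mem_preimage, e]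
  simp only [mem_inter_iff, mem_ball, EuclideanSpace.dist_eq, Fin.sum_univ_two, lensSet,
    mem_ofPred_eq, Real.dist_eq, sq_abs, h0, h1, Real.sqrt_lt' hs, Real.sqrt_lt' hr,
    PiLp.zero_apply, sub_zero]

lemma lens_vol_s10 (s r c : ℝ) (hs : 0 < s) (hr : 0 < r) :
    volume (ball (pc c) s ∩ ball 0 r) = volume (lensSet s r c) := by
  rw [lens_eq_s10 s r c hs hr, planeEquiv_mp.measure_preimage_equiv]

lemma lens_ne_top (s r c : ℝ) (hs : 0 < s) (hr : 0 < r) : volume (lensSet s r c) ≠ ⊤ := by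
  rw [← lens_vol_s10 s r c hs hr]
  exact measure_ne_top_of_subset inter_subset_left measure_ball_lt_top.ne

/-- For the uniform probability measure `μ₀` on the annulus
`{p | R ≤ ‖p‖ ≤ Q}` and any `s > 0`, the function `ν̃_s(c) = μ₀(B((c,0),s))` is unimodal on
`[R,Q]`: there is `ω ∈ [R,Q]` such that `ν̃_s` is non-decreasing on `[R,ω]` and non-increasing
on `[ω,Q]`. -/
theorem annulus_nu_unimodal
    (R Q : ℝ) (hR : 0 < R) (hRQ : R < Q)
    (μ₀ : Measure (EuclideanSpace ℝ (Fin 2)))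
    (hμ₀ : μ₀ = volume.withDensity (fun p =>
      if R ≤ ‖p‖ ∧ ‖p‖ ≤ Q then ENNReal.ofReal (1 / (Real.pi * (Q ^ 2 - R ^ 2))) else 0))
    (s : ℝ) (hs : 0 < s)
    (ν : ℝ → ℝ) (hν : ∀ c, ν c = (μ₀ (ball (pc c) s)).toReal) :
    ∃ ω ∈ Icc R Q, MonotoneOn ν (Icc R ω) ∧ AntitoneOn ν (Icc ω Q) := by
  have hQ : 0 < Q := hR.trans hRQ
  have hQR : R ^ 2 < Q ^ 2 := by nlinarith
  set k : ℝ := 1 / (Real.pi * (Q ^ 2 - R ^ 2)) with hk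
  have hk0 : 0 ≤ k := by
    have : 0 < Q ^ 2 - R ^ 2 := by linarith
    have := Real.pi_pos
    positivity
  -- the formula for `ν`
  have hform : ∀ c, ν c = k *
      ((volume (lensSet s Q c)).toReal - (volume (lensSet s R c)).toReal) := by
    intro c
    have hA : MeasurableSet {p : EuclideanSpace ℝ (Fin 2) | R ≤ ‖p‖ ∧ ‖p‖ ≤ Q} :=
      (measurableSet_le measurable_const measurable_norm).inter
        (measurableSet_le measurable_norm measurable_const)
    have hf : (fun p : EuclideanSpace ℝ (Fin 2) =>
        if R ≤ ‖p‖ ∧ ‖p‖ ≤ Q then ENNReal.ofReal k else 0) =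
        {p : EuclideanSpace ℝ (Fin 2) | R ≤ ‖p‖ ∧ ‖p‖ ≤ Q}.indicator
          (fun _ => ENNReal.ofReal k) := by
      ext p
      simp [indicator]
    have hae : ({p : EuclideanSpace ℝ (Fin 2) | R ≤ ‖p‖ ∧ ‖p‖ ≤ Q} ∩ ball (pc c) s : Set _)
        =ᵐ[volume] ((ball (pc c) s ∩ ball 0 Q) \ (ball (pc c) s ∩ ball 0 R) : Set _) := by
      have hz : volume (sphere (0 : EuclideanSpace ℝ (Fin 2)) Q) = 0 :=
        Measure.addHaar_sphere _ _ _
      have : ∀ᵐ p : EuclideanSpace ℝ (Fin 2), p ∉ sphere (0 : EuclideanSpace ℝ (Fin 2)) Q :=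
        measure_eq_zero_iff_ae_notMem.1 hz
      filter_upwards [this] with p hp
      have hp' : ‖p‖ ≠ Q := by simpa using hp
      apply propext
      change p ∈ ({p : EuclideanSpace ℝ (Fin 2) | R ≤ ‖p‖ ∧ ‖p‖ ≤ Q} ∩ ball (pc c) s : Set _) ↔
        p ∈ ((ball (pc c) s ∩ ball 0 Q) \ (ball (pc c) s ∩ ball 0 R) : Set _)
      simp only [mem_inter_iff, mem_ofPred_eq, mem_sdiff, mem_ball_zero_iff, not_and, not_lt]
      constructor
      · rintro ⟨⟨h1, h2⟩, h3⟩
        exact ⟨⟨h3, lt_of_le_of_ne h2 hp'⟩, fun _ => h1⟩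
      · rintro ⟨⟨h1, h2⟩, h3⟩
        exact ⟨⟨h3 h1, h2.le⟩, h1⟩
    have hsub : ball (pc c) s ∩ ball 0 R ⊆ ball (pc c) s ∩ ball 0 Q :=
      inter_subset_inter_right _ (ball_subset_ball hRQ.le)
    rw [hν, hμ₀, withDensity_apply _ measurableSet_ball, hf, lintegral_indicator hA,
      setLIntegral_const, Measure.restrict_apply hA, measure_congr hae,
      measure_sdiff hsub (measurableSet_ball.inter measurableSet_ball).nullMeasurableSet
        (by rw [lens_vol_s10 s R c hs hR]; exact lens_ne_top s R c hs hR),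
      ENNReal.toReal_mul, ENNReal.toReal_ofReal hk0,
      ENNReal.toReal_sub_of_le (measure_mono hsub)
        (by rw [lens_vol_s10 s Q c hs hQ]; exact lens_ne_top s Q c hs hQ),
      lens_vol_s10 s R c hs hR, lens_vol_s10 s Q c hs hQ]
  have hch : ∀ r a c, 0 < r → 0 < a → a ≤ c → volume (chordSet s r a c) ≠ ⊤ := by
    intro r a c hr ha hac h
    have := lens_volume_add s r a c ha hac
    rw [h, add_top] at this
    exact lens_ne_top s r a hs hr this
  have hadd : ∀ r a c, 0 < r → 0 < a → a ≤ c → (volume (lensSet s r a)).toReal =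
      (volume (lensSet s r c)).toReal + (volume (chordSet s r a c)).toReal := by
    intro r a c hr ha hac
    rw [lens_volume_add s r a c ha hac,
      ENNReal.toReal_add (lens_ne_top s r c hs hr) (hch r a c hr ha hac)]
  have hup : ∀ a c, 0 < a → a ≤ c → c ^ 2 ≤ (Q ^ 2 + R ^ 2) / 2 - s ^ 2 → ν a ≤ ν c := by
    intro a c ha hac hc
    have hsub : chordSet s Q a c ⊆ chordSet s R a c := by
      rintro ⟨t, y⟩ ⟨h1, h2, h3⟩
      refine ⟨h1, h2, h3.trans_le ?_⟩
      dsimp only at *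
      have : t ^ 2 ≤ c ^ 2 := by nlinarith
      nlinarith [mul_nonneg (sub_nonneg.2 hQR.le)
        (show 0 ≤ (Q ^ 2 + R ^ 2) - 2 * s ^ 2 - 2 * t ^ 2 by linarith)]
    have := ENNReal.toReal_mono (hch R a c hR ha hac) (measure_mono (μ := volume) hsub)
    rw [hform, hform, hadd Q a c hQ ha hac, hadd R a c hR ha hac]
    exact mul_le_mul_of_nonneg_left (by linarith) hk0
  have hdown : ∀ a c, 0 < a → a ≤ c → (Q ^ 2 + R ^ 2) / 2 - s ^ 2 ≤ a ^ 2 → ν c ≤ ν a := by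
    intro a c ha hac hc
    have hsub : chordSet s R a c ⊆ chordSet s Q a c := by
      rintro ⟨t, y⟩ ⟨h1, h2, h3⟩
      refine ⟨h1, h2, h3.trans_le ?_⟩
      dsimp only at *
      have : a ^ 2 ≤ t ^ 2 := by nlinarith
      nlinarith [mul_nonneg (sub_nonneg.2 hQR.le)
        (show 0 ≤ 2 * t ^ 2 + 2 * s ^ 2 - (Q ^ 2 + R ^ 2) by linarith)]
    have := ENNReal.toReal_mono (hch Q a c hQ ha hac) (measure_mono (μ := volume) hsub)
    rw [hform, hform, hadd Q a c hQ ha hac, hadd R a c hR ha hac]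
    exact mul_le_mul_of_nonneg_left (by linarith) hk0
  set m := (Q ^ 2 + R ^ 2) / 2 - s ^ 2 with hm
  rcases le_total m (R ^ 2) with h1 | h1
  · refine ⟨R, ⟨le_rfl, hRQ.le⟩, ?_, ?_⟩
    · intro x hx y hy _
      rw [le_antisymm hx.2 hx.1, le_antisymm hy.2 hy.1]
    · intro x hx y hy hxy
      exact hdown x y (hR.trans_le hx.1) hxy (h1.trans (by nlinarith [hx.1]))
  · have hm0 : 0 ≤ m := (sq_nonneg R).trans h1
    have hmQ : m ≤ Q ^ 2 := by nlinarith [sq_nonneg s]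
    refine ⟨√m, ⟨Real.le_sqrt_of_sq_le h1, (Real.sqrt_le_left hQ.le).2 hmQ⟩, ?_, ?_⟩
    · intro x hx y hy hxy
      refine hup x y (hR.trans_le hx.1) hxy ?_
      exact (Real.le_sqrt (hR.le.trans hy.1) hm0).1 hy.2
    · intro x hx y hy hxy
      have hx0 : 0 < x := hR.trans_le ((Real.le_sqrt_of_sq_le h1).trans hx.1)
      exact hdown x y hx0 hxy ((Real.sqrt_le_left hx0.le).1 hx.1)
end

section
/- Fix 0 < R < Q and 0 < w < 1, set a = w/(πR²) and b = (1−w)/(π(Q²−R²)), assume a < b, and let μ be the measure on the Euclidean plane with density f with respect to 2-dimensional Lebesgue measure, where f(p) = a if ‖p‖ < R, f(p) = b if R ≤ ‖p‖ ≤ Q, and f(p) = 0 if ‖p‖ > Q. Suppose 0 < s ≤ (Q − R)/2, and let ν_s(c) = μ(B(p_c,s)) for c ∈ [0,Q]. Then: (i) ν_s is constant on [0, |R − s|]; (ii) ν_s is strictly increasing on [|R − s|, R + s]; (iii) ν_s is constant on [R + s, Q − s], where it attains its maximum over [0,Q]; and (iv) ν_s is strictly decreasing on [Q − s, Q]. 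-/
open Set MeasureTheory Metric

abbrev Pl := EuclideanSpace ℝ (Fin 2)

lemma pc_zero_coord (c : ℝ) : (pc c) 0 = c := by simp [pc]
lemma pc_one_coord (c : ℝ) : (pc c) 1 = 0 := by simp [pc]

lemma pc_norm_s13 (c : ℝ) : ‖pc c‖ = |c| := by
  simp [EuclideanSpace.norm_eq, Fin.sum_univ_two, pc_zero_coord, pc_one_coord, Real.sqrt_sq_eq_abs]

lemma pc_sub (c d : ℝ) : pc c - pc d = pc (c - d) := by
  ext i; fin_cases i <;> simp [pc]

lemma pl_norm_sq (y : Pl) : ‖y‖ ^ 2 = y 0 ^ 2 + y 1 ^ 2 := by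
  simp [EuclideanSpace.norm_sq_eq, Fin.sum_univ_two]

lemma key_strict (r s c d : ℝ) (hr : 0 < r) (hs : 0 < s) (hc : |r - s| ≤ c) (hcd : c < d)
    (hd : d ≤ r + s) (K : Set Pl) (hK : MeasurableSet K)
    (h1 : ∀ y z : Pl, ‖z‖ ≤ ‖y‖ → y ∈ K → z ∈ K) (h2 : ball (0 : Pl) r ⊆ K)
    (h3 : K ⊆ closedBall (0 : Pl) r) :
    volume.real (ball (pc d) s ∩ K) < volume.real (ball (pc c) s ∩ K) := by
  obtain ⟨hc1, hc2⟩ := abs_le.1 hc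
  have hc0 : 0 ≤ c := (abs_nonneg _).trans hc
  set S := ball (pc c) s ∩ K with hS
  set T := ball (pc d) s ∩ K with hT
  have mS : MeasurableSet S := measurableSet_ball.inter hK
  have mT : MeasurableSet T := measurableSet_ball.inter hK
  have fS : volume S ≠ ⊤ := measure_ne_top_of_subset inter_subset_left measure_ball_lt_top.ne
  have fT : volume T ≠ ⊤ := measure_ne_top_of_subset inter_subset_left measure_ball_lt_top.ne
  set σ : Pl → Pl := fun y => pc (c + d) - y with hσ
  have mp : MeasurePreserving σ volume volume := Measure.measurePreserving_sub_left volume _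
  have hσc : ∀ y, ‖σ y - pc c‖ = ‖y - pc d‖ := by
    intro y
    have : σ y - pc c = -(y - pc d) := by
      ext i; fin_cases i <;> simp [hσ, pc] <;> ring
    rw [this, norm_neg]
  have hσd : ∀ y, ‖σ y - pc d‖ = ‖y - pc c‖ := by
    intro y
    have : σ y - pc d = -(y - pc c) := by
      ext i; fin_cases i <;> simp [hσ, pc] <;> ring
    rw [this, norm_neg]
  have hσn : ∀ y, ‖y - pc c‖ ≤ ‖y - pc d‖ → ‖y‖ ≤ ‖σ y‖ := by
    intro y hy
    have e1 := pow_le_pow_left₀ (norm_nonneg _) hy 2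
    refine le_of_sq_le_sq ?_ (norm_nonneg _)
    rw [pl_norm_sq, pl_norm_sq] at *
    simp only [hσ, PiLp.sub_apply, pc_zero_coord, pc_one_coord] at *
    have : y 0 * 2 ≤ c + d := by
      by_contra hh
      nlinarith
    nlinarith
  let U : Set Pl := (ball (pc c) s ∩ ball 0 r) ∩ ({z | s < ‖z - pc d‖} ∩ {z | r < ‖σ z‖})
  have hUo : IsOpen U := by
    refine (isOpen_ball.inter isOpen_ball).inter (IsOpen.inter ?_ ?_)
    · exact isOpen_lt continuous_const (by fun_prop)
    · exact isOpen_lt continuous_const (by fun_prop)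
  have hUne : U.Nonempty := by
    obtain ⟨ε, h0, hε⟩ : ∃ ε, 0 < ε ∧ ε < min (min (2 * s) (d - c)) (min (d + s - r) (r + s - c)) := by
      apply exists_between
      simp only [lt_min_iff]
      refine ⟨⟨?_, ?_⟩, ?_, ?_⟩ <;> linarith
    simp only [lt_min_iff] at hε
    obtain ⟨⟨e1, e2⟩, e3, e4⟩ := hε
    refine ⟨pc (c - s + ε), ⟨?_, ?_⟩, ?_, ?_⟩
    · rw [mem_ball_iff_norm, pc_sub, pc_norm_s13, abs_lt]; constructor <;> linarith
    · rw [mem_ball_zero_iff, pc_norm_s13, abs_lt]; constructor <;> linarith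
    · rw [mem_ofPred_eq, pc_sub, pc_norm_s13, lt_abs]; right; linarith
    · rw [mem_ofPred_eq, hσ]; simp only []; rw [pc_sub, pc_norm_s13, lt_abs]; left; linarith
  have hUpos : 0 < volume U := hUo.measure_pos _ hUne
  have fU : volume U ≠ ⊤ := measure_ne_top_of_subset
    (inter_subset_left.trans inter_subset_left) measure_ball_lt_top.ne
  have sub1 : σ ⁻¹' (T \ S) ⊆ (S \ T) \ U := by
    rintro y ⟨⟨yT1, yT2⟩, yS⟩
    rw [mem_ball_iff_norm, hσd] at yT1
    have y2 : s ≤ ‖y - pc d‖ := by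
      by_contra hh
      apply yS
      refine ⟨?_, yT2⟩
      rw [mem_ball_iff_norm, hσc]; linarith
    refine ⟨⟨⟨by rwa [mem_ball_iff_norm], h1 _ _ (hσn y (by linarith)) yT2⟩, ?_⟩, ?_⟩
    · rintro ⟨h, -⟩
      rw [mem_ball_iff_norm] at h; linarith
    · rintro ⟨-, -, h⟩
      have := h3 yT2
      rw [mem_closedBall_zero_iff] at this
      simp only [mem_ofPred_eq] at h
      linarith
  have sub2 : U ⊆ S \ T := by
    rintro y ⟨⟨u1, u2⟩, u3, u4⟩
    refine ⟨⟨u1, h2 u2⟩, ?_⟩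
    rintro ⟨h, -⟩
    rw [mem_ball_iff_norm] at h
    simp only [mem_ofPred_eq] at u3
    linarith
  have q1 : volume.real (T \ S) ≤ volume.real ((S \ T) \ U) := by
    have : volume.real (σ ⁻¹' (T \ S)) = volume.real (T \ S) := by
      simp only [Measure.real]
      rw [mp.measure_preimage (mT.diff mS).nullMeasurableSet]
    rw [← this]
    exact measureReal_mono sub1 (measure_ne_top_of_subset (sdiff_subset.trans sdiff_subset) fS)
  have q2 : volume.real ((S \ T) \ U) = volume.real (S \ T) - volume.real U :=
    measureReal_sdiff sub2 hUo.measurableSet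
      (measure_ne_top_of_subset sdiff_subset fS)
  have q3 : 0 < volume.real U := ENNReal.toReal_pos hUpos.ne' fU
  have q4 : volume.real (S ∩ T) + volume.real (S \ T) = volume.real S :=
    measureReal_inter_add_sdiff mT fS
  have q5 : volume.real (T ∩ S) + volume.real (T \ S) = volume.real T :=
    measureReal_inter_add_sdiff mS fT
  rw [inter_comm] at q5
  linarith

lemma nu_formula (R Q a b s c : ℝ) (hRQ : R < Q) (ha : 0 ≤ a) (hb : 0 ≤ b) :
    ((volume.withDensity (fun p : Pl =>
      if ‖p‖ < R then ENNReal.ofReal a else if ‖p‖ ≤ Q then ENNReal.ofReal b else 0))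
      (ball (pc c) s)).toReal =
    b * volume.real (ball (pc c) s ∩ closedBall 0 Q)
      - (b - a) * volume.real (ball (pc c) s ∩ ball 0 R) := by
  have hsub : ball (0:Pl) R ⊆ closedBall 0 Q :=
    ball_subset_closedBall.trans (closedBall_subset_closedBall hRQ.le)
  have hf : (fun p : Pl =>
      if ‖p‖ < R then ENNReal.ofReal a else if ‖p‖ ≤ Q then ENNReal.ofReal b else 0) =
      fun p => (ball (0:Pl) R).indicator (fun _ => ENNReal.ofReal a) p +
        (closedBall (0:Pl) Q \ ball 0 R).indicator (fun _ => ENNReal.ofReal b) p := by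
    funext p
    by_cases h : ‖p‖ < R
    · simp [h]
    · by_cases h' : ‖p‖ ≤ Q
      · simp [Set.indicator, h, h']
      · simp [Set.indicator, h, h']
  have m1 : MeasurableSet (ball (0:Pl) R) := measurableSet_ball
  have m2 : MeasurableSet (closedBall (0:Pl) Q) := measurableSet_closedBall
  have m3 : MeasurableSet (closedBall (0:Pl) Q \ ball 0 R) := m2.diff m1
  have f : ∀ X : Set Pl, volume (ball (pc c) s ∩ X) ≠ ⊤ := fun X =>
    measure_ne_top_of_subset inter_subset_left measure_ball_lt_top.ne
  rw [hf, withDensity_apply _ measurableSet_ball,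
    lintegral_add_left (measurable_const.indicator m1),
    lintegral_indicator_const m1, lintegral_indicator_const m3,
    Measure.restrict_apply m1, Measure.restrict_apply m3,
    inter_comm (ball (0:Pl) R), inter_comm (closedBall (0:Pl) Q \ _)]
  rw [ENNReal.toReal_add (ENNReal.mul_ne_top ENNReal.ofReal_ne_top (f _))
    (ENNReal.mul_ne_top ENNReal.ofReal_ne_top (f _)), ENNReal.toReal_mul, ENNReal.toReal_mul,
    ENNReal.toReal_ofReal ha, ENNReal.toReal_ofReal hb]
  have : volume.real (ball (pc c) s ∩ closedBall 0 Q ∩ ball 0 R)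
      + volume.real ((ball (pc c) s ∩ closedBall 0 Q) \ ball 0 R)
      = volume.real (ball (pc c) s ∩ closedBall 0 Q) :=
    measureReal_inter_add_sdiff m1 (f _)
  rw [inter_assoc, inter_eq_self_of_subset_right hsub, inter_sdiff_assoc] at this
  rw [← this]
  simp only [Measure.real]
  ring

lemma ball_vol (c s : ℝ) : volume.real (ball (pc c) s) = volume.real (ball (0:Pl) s) := by
  simp only [Measure.real, Measure.addHaar_ball_center volume (pc c) s]

lemma g_inside (c s : ℝ) (K : Set Pl) (r : ℝ) (hK : ball (0:Pl) r ⊆ K) (h0 : 0 ≤ c)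
    (h : c + s ≤ r) :
    volume.real (ball (pc c) s ∩ K) = volume.real (ball (0:Pl) s) := by
  rw [inter_eq_self_of_subset_left, ball_vol]
  refine (ball_subset_ball' ?_).trans hK
  rw [dist_zero_right, pc_norm_s13, abs_of_nonneg h0]; linarith

/-- For the weighted annulus measure `μ = W(R,Q,w)` with `a < b`, and
`0 < s ≤ (Q - R)/2`, the function `ν_s(c) = μ(B((c,0),s))` is: (i) constant on `[0, |R-s|]`;
(ii) strictly increasing on `[|R-s|, R+s]`; (iii) constant on `[R+s, Q-s]`, where it attains
its maximum over `[0,Q]`; and (iv) strictly decreasing on `[Q-s, Q]`. -/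
theorem weighted_annulus_nu_small_s
    (R Q w a b : ℝ) (hR : 0 < R) (hRQ : R < Q) (hw0 : 0 < w) (hw1 : w < 1)
    (ha : a = w / (Real.pi * R ^ 2))
    (hb : b = (1 - w) / (Real.pi * (Q ^ 2 - R ^ 2)))
    (hab : a < b)
    (μ : Measure (EuclideanSpace ℝ (Fin 2)))
    (hμ : μ = volume.withDensity (fun p =>
      if ‖p‖ < R then ENNReal.ofReal a else if ‖p‖ ≤ Q then ENNReal.ofReal b else 0))
    (s : ℝ) (hs0 : 0 < s) (hs : s ≤ (Q - R) / 2)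
    (ν : ℝ → ℝ) (hν : ∀ c, ν c = (μ (ball (pc c) s)).toReal) :
    (∀ c₁ ∈ Icc (0:ℝ) |R - s|, ∀ c₂ ∈ Icc (0:ℝ) |R - s|, ν c₁ = ν c₂) ∧
    StrictMonoOn ν (Icc |R - s| (R + s)) ∧
    (∀ c₁ ∈ Icc (R + s) (Q - s), ∀ c₂ ∈ Icc (R + s) (Q - s), ν c₁ = ν c₂) ∧
    (∀ c ∈ Icc (0:ℝ) Q, ν c ≤ ν (R + s)) ∧
    StrictAntiOn ν (Icc (Q - s) Q) := by
  have hQ : 0 < Q := hR.trans hRQ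
  have ha0 : 0 ≤ a := by rw [ha]; positivity
  have hb0 : 0 < b := ha0.trans_lt hab
  have hN : ∀ c, ν c = b * volume.real (ball (pc c) s ∩ closedBall 0 Q)
      - (b - a) * volume.real (ball (pc c) s ∩ ball 0 R) := by
    intro c
    rw [hν, hμ]
    exact nu_formula R Q a b s c hRQ ha0 hb0.le
  have gQ : ∀ c, 0 ≤ c → c ≤ Q - s → volume.real (ball (pc c) s ∩ closedBall 0 Q)
      = volume.real (ball (0:Pl) s) := fun c h0 h =>
    g_inside c s _ Q ball_subset_closedBall h0 (by linarith)
  have gR : ∀ c, R + s ≤ c → volume.real (ball (pc c) s ∩ ball 0 R) = 0 := by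
    intro c h
    rw [Disjoint.inter_eq]
    · simp
    · apply ball_disjoint_ball
      rw [dist_zero_right, pc_norm_s13, abs_of_nonneg (by linarith)]; linarith
  have hRs : |R - s| ≤ Q - s := by
    rw [abs_le]; constructor <;> linarith
  refine ⟨?_, ?_, ?_, ?_, ?_⟩
  · have hconst : ∀ c ∈ Icc (0:ℝ) |R - s|, volume.real (ball (pc c) s ∩ ball 0 R)
        = volume.real (ball (0:Pl) (min R s)) := by
      rintro c ⟨h0, h⟩
      rcases le_total s R with hsR | hsR
      · rw [abs_of_nonneg (by linarith)] at h
        rw [min_eq_right hsR]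
        exact g_inside c s _ R subset_rfl h0 (by linarith)
      · rw [abs_of_nonpos (by linarith)] at h
        rw [min_eq_left hsR, inter_eq_self_of_subset_right]
        apply ball_subset_ball'
        rw [dist_zero_left, pc_norm_s13, abs_of_nonneg h0]; linarith
    intro c₁ h₁ c₂ h₂
    rw [hN, hN, hconst c₁ h₁, hconst c₂ h₂, gQ c₁ h₁.1 (h₁.2.trans hRs),
      gQ c₂ h₂.1 (h₂.2.trans hRs)]
  · intro c hc d hd hcd
    have c0 : 0 ≤ c := (abs_nonneg _).trans hc.1
    have := key_strict R s c d hR hs0 hc.1 hcd hd.2 (ball 0 R) measurableSet_ball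
      (fun y z h hy => by rw [mem_ball_zero_iff] at *; linarith) subset_rfl ball_subset_closedBall
    rw [hN, hN, gQ c c0 (by linarith [hc.2]), gQ d (by linarith) (by linarith [hd.2])]
    nlinarith [mul_lt_mul_of_pos_left this (sub_pos.2 hab)]
  · intro c₁ h₁ c₂ h₂
    rw [hN, hN, gR c₁ h₁.1, gR c₂ h₂.1, gQ c₁ (by linarith [h₁.1]) h₁.2,
      gQ c₂ (by linarith [h₂.1]) h₂.2]
  · intro c hc
    rw [hN, hN, gR (R + s) le_rfl, gQ (R + s) (by linarith) (by linarith)]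
    have e1 : volume.real (ball (pc c) s ∩ closedBall 0 Q) ≤ volume.real (ball (0:Pl) s) := by
      rw [← ball_vol c s]
      exact measureReal_mono inter_subset_left measure_ball_lt_top.ne
    have e2 : 0 ≤ volume.real (ball (pc c) s ∩ ball 0 R) := measureReal_nonneg
    nlinarith [mul_le_mul_of_nonneg_left e1 hb0.le, mul_nonneg (sub_pos.2 hab).le e2]
  · intro c hc d hd hcd
    have := key_strict Q s c d hQ hs0 (by rw [abs_of_nonneg (by linarith)]; exact hc.1) hcd
      (by linarith [hd.2]) (closedBall 0 Q) measurableSet_closedBall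
      (fun y z h hy => by rw [mem_closedBall_zero_iff] at *; linarith) ball_subset_closedBall
      subset_rfl
    rw [hN, hN, gR c (by linarith [hc.1]), gR d (by linarith [hd.1])]
    nlinarith [mul_lt_mul_of_pos_left this hb0]
end

section
/- Fix 0 < R < Q and 0 < w < 1, set a = w/(πR²) and b = (1−w)/(π(Q²−R²)), assume a < b, and let μ be the measure on the Euclidean plane with density f with respect to 2-dimensional Lebesgue measure, where f(p) = a if ‖p‖ < R, f(p) = b if R ≤ ‖p‖ ≤ Q, and f(p) = 0 if ‖p‖ > Q. Suppose s ≥ (R + Q)/2, and let ν_s(c) = μ(B(p_c,s)) for c ∈ [0,Q]. Then ν_s is non-increasing on [0,Q]; in particular, ν_s attains its maximum over [0,Q] at c = 0. -/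
open Set MeasureTheory Metric

/-- The density in coordinates. -/
noncomputable def dens (R Q : ℝ) (A B : ENNReal) (x y : ℝ) : ENNReal :=
  if x ^ 2 + y ^ 2 < R ^ 2 then A else if x ^ 2 + y ^ 2 ≤ Q ^ 2 then B else 0

lemma dens_measurable (R Q : ℝ) (A B : ENNReal) :
    Measurable (fun p : ℝ × ℝ => dens R Q A B p.1 p.2) := by
  unfold dens
  refine Measurable.ite (measurableSet_lt (by fun_prop) (by fun_prop)) measurable_const
    (Measurable.ite (measurableSet_le (by fun_prop) (by fun_prop)) measurable_const
      measurable_const)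

lemma dens_le {R Q : ℝ} {A B : ENNReal} (hAB : A ≤ B) (x y : ℝ) : dens R Q A B x y ≤ B := by
  unfold dens
  split_ifs <;> simp [hAB]

lemma dens_key {R Q s t h y : ℝ} {A B : ENNReal} (hAB : A ≤ B) (hR : 0 < R) (hRQ : R < Q)
    (hs : (R + Q) / 2 ≤ s) (ht : 0 ≤ t) (hh : 0 ≤ h) (hhy : h ^ 2 + y ^ 2 = s ^ 2) :
    dens R Q A B (t + h) y ≤ dens R Q A B (t - h) y := by
  have hth : 0 ≤ t * h := mul_nonneg ht hh
  have hle : (t - h) ^ 2 + y ^ 2 ≤ (t + h) ^ 2 + y ^ 2 := by nlinarith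
  unfold dens
  split_ifs with h1 h2 h3 h4 h5 h6
  all_goals first
    | exact le_rfl
    | exact hAB
    | exact zero_le
    | (exfalso; linarith)
    | skip
  exfalso
  have hsum : 2 * (t ^ 2 + s ^ 2) < R ^ 2 + Q ^ 2 := by nlinarith
  have hs2 : ((R + Q) / 2) ^ 2 ≤ s ^ 2 := pow_le_pow_left₀ (by linarith) hs 2
  have ht2 : t ^ 2 < ((Q - R) / 2) ^ 2 := by nlinarith
  have ht3 : t < (Q - R) / 2 := lt_of_pow_lt_pow_left₀ 2 (by linarith) ht2
  have hhs : h ≤ s := le_of_sq_le_sq (by nlinarith [sq_nonneg y]) (by linarith)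
  have h7 : (s - t) ^ 2 ≤ (t - h) ^ 2 + y ^ 2 := by nlinarith [mul_le_mul_of_nonneg_left hhs ht]
  have h8 : R ^ 2 ≤ (s - t) ^ 2 := pow_le_pow_left₀ hR.le (by linarith) 2
  linarith

lemma slice_Ioc {F : ℝ → ENNReal} {M : ENNReal} (hM : M ≠ ⊤)
    (hFM : ∀ x, F x ≤ M) {c d h : ℝ} (hcd : c ≤ d) (hh : 0 ≤ h)
    (hkey : ∀ t, c < t → F (t + h) ≤ F (t - h)) :
    ∫⁻ x in Ioc (d - h) (d + h), F x ≤ ∫⁻ x in Ioc (c - h) (c + h), F x := by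
  have e1 : ∫⁻ x in Ioc (c - h) (d + h), F x
      = (∫⁻ x in Ioc (c - h) (d - h), F x) + ∫⁻ x in Ioc (d - h) (d + h), F x := by
    rw [← lintegral_union measurableSet_Ioc (Ioc_disjoint_Ioc_of_le le_rfl),
      Ioc_union_Ioc_eq_Ioc (by linarith) (by linarith)]
  have e2 : ∫⁻ x in Ioc (c - h) (d + h), F x
      = (∫⁻ x in Ioc (c - h) (c + h), F x) + ∫⁻ x in Ioc (c + h) (d + h), F x := by
    rw [← lintegral_union measurableSet_Ioc (Ioc_disjoint_Ioc_of_le le_rfl),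
      Ioc_union_Ioc_eq_Ioc (by linarith) (by linarith)]
  have e3 : ∫⁻ x in Ioc (c + h) (d + h), F x ≤ ∫⁻ x in Ioc (c - h) (d - h), F x := by
    rw [← lintegral_indicator measurableSet_Ioc, ← lintegral_indicator measurableSet_Ioc,
      ← lintegral_add_right_eq_self _ h,
      ← lintegral_add_right_eq_self ((Ioc (c - h) (d - h)).indicator F) (-h)]
    refine lintegral_mono fun t => ?_
    by_cases ht : t ∈ Ioc c d
    · rw [indicator_of_mem (by constructor <;> linarith [ht.1, ht.2]),
        indicator_of_mem (by constructor <;> linarith [ht.1, ht.2])]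
      exact hkey t ht.1
    · rw [indicator_of_notMem]
      · exact zero_le
      · intro h'
        exact ht ⟨by linarith [h'.1], by linarith [h'.2]⟩
  have fin : ∫⁻ x in Ioc (c - h) (d - h), F x ≠ ⊤ := by
    refine ne_top_of_le_ne_top ?_ (setLIntegral_mono' measurableSet_Ioc fun x _ => hFM x)
    rw [setLIntegral_const]
    exact ENNReal.mul_ne_top hM (by simp)
  refine (ENNReal.add_le_add_iff_left fin).1 ?_
  rw [← e1, e2, add_comm]
  gcongr

lemma slice {R Q s c d : ℝ} {A B : ENNReal} (hAB : A ≤ B) (hB : B ≠ ⊤) (hR : 0 < R)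
    (hRQ : R < Q) (hs : (R + Q) / 2 ≤ s) (hc : 0 ≤ c) (hcd : c ≤ d) (y : ℝ) :
    ∫⁻ x, ({x : ℝ | (x - d) ^ 2 + y ^ 2 < s ^ 2}).indicator (fun x => dens R Q A B x y) x ≤
    ∫⁻ x, ({x : ℝ | (x - c) ^ 2 + y ^ 2 < s ^ 2}).indicator (fun x => dens R Q A B x y) x := by
  by_cases hy : y ^ 2 < s ^ 2
  · have hset : ∀ e : ℝ, {x : ℝ | (x - e) ^ 2 + y ^ 2 < s ^ 2}
        = Ioo (e - √(s ^ 2 - y ^ 2)) (e + √(s ^ 2 - y ^ 2)) := by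
      intro e
      ext x
      have : (x - e) ^ 2 + y ^ 2 < s ^ 2 ↔ (x - e) ^ 2 < s ^ 2 - y ^ 2 := by
        constructor <;> intro h <;> linarith
      rw [mem_ofPred_eq, this, Real.sq_lt, mem_Ioo]
      constructor <;> rintro ⟨h1, h2⟩ <;> constructor <;> linarith
    rw [hset, hset, lintegral_indicator measurableSet_Ioo, lintegral_indicator measurableSet_Ioo,
      setLIntegral_congr Ioo_ae_eq_Ioc, setLIntegral_congr Ioo_ae_eq_Ioc]
    refine slice_Ioc hB (fun x => dens_le hAB x y) hcd (Real.sqrt_nonneg _) fun t ht => ?_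
    refine dens_key hAB hR hRQ hs (by linarith) (Real.sqrt_nonneg _) ?_
    rw [Real.sq_sqrt (by linarith)]
    ring
  · have : {x : ℝ | (x - d) ^ 2 + y ^ 2 < s ^ 2} = ∅ := by
      ext x
      simp only [mem_ofPred_eq, mem_empty_iff_false, iff_false]
      intro h
      nlinarith [sq_nonneg (x - d)]
    rw [this]
    simp

lemma measure_ball_eq {R Q s : ℝ} {A B : ENNReal} (hR : 0 < R) (hQ : 0 < Q) (hs : 0 < s)
    (c : ℝ) :
    (volume.withDensity (fun p : EuclideanSpace ℝ (Fin 2) =>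
      if ‖p‖ < R then A else if ‖p‖ ≤ Q then B else 0)) (ball (pc c) s)
    = ∫⁻ y, ∫⁻ x, ({x : ℝ | (x - c) ^ 2 + y ^ 2 < s ^ 2}).indicator
        (fun x => dens R Q A B x y) x := by
  rw [withDensity_apply _ measurableSet_ball, ← lintegral_indicator measurableSet_ball]
  set G : ℝ × ℝ → ENNReal := fun p =>
    ({p : ℝ × ℝ | (p.1 - c) ^ 2 + p.2 ^ 2 < s ^ 2}).indicator
      (fun p => dens R Q A B p.1 p.2) p with hG
  have hGm : Measurable G :=
    (dens_measurable R Q A B).indicator (measurableSet_lt (by fun_prop) (by fun_prop))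
  have mp := (volume_preserving_finTwoArrow ℝ).comp
    (EuclideanSpace.volume_preserving_symm_measurableEquiv_toLp (Fin 2))
  have h1 : ∫⁻ y, ∫⁻ x, ({x : ℝ | (x - c) ^ 2 + y ^ 2 < s ^ 2}).indicator
        (fun x => dens R Q A B x y) x = ∫⁻ p, G p := by
    rw [Measure.volume_eq_prod, lintegral_prod_symm _ hGm.aemeasurable]
    rfl
  rw [h1, ← mp.lintegral_comp hGm]
  refine lintegral_congr fun p => ?_
  have hn : ‖p‖ ^ 2 = p 0 ^ 2 + p 1 ^ 2 := by
    rw [EuclideanSpace.norm_sq_eq]; simp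
  have hd : p ∈ ball (pc c) s ↔ (p 0 - c) ^ 2 + p 1 ^ 2 < s ^ 2 := by
    rw [mem_ball, dist_eq_norm, ← sq_lt_sq₀ (norm_nonneg _) hs.le, EuclideanSpace.norm_sq_eq]
    simp [pc]
  have i1 : ‖p‖ < R ↔ p 0 ^ 2 + p 1 ^ 2 < R ^ 2 := by
    rw [← hn, sq_lt_sq₀ (norm_nonneg _) hR.le]
  have i2 : ‖p‖ ≤ Q ↔ p 0 ^ 2 + p 1 ^ 2 ≤ Q ^ 2 := by
    rw [← hn, sq_le_sq₀ (norm_nonneg _) hQ.le]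
  have hG2 : G (((MeasurableEquiv.finTwoArrow (α := ℝ)) ∘
      (MeasurableEquiv.toLp 2 (Fin 2 → ℝ)).symm) p) = G (p 0, p 1) := rfl
  refine Eq.trans ?_ hG2.symm
  simp only [hG, indicator, mem_ofPred_eq, hd, i1, i2, dens]

/-- For the weighted annulus measure `μ = W(R,Q,w)` with `a < b`, and
`s ≥ (R + Q)/2`, the function `ν_s(c) = μ(B((c,0),s))` is non-increasing on `[0,Q]`; in
particular it attains its maximum over `[0,Q]` at `c = 0`. -/
theorem weighted_annulus_nu_large_s
    (R Q w a b : ℝ) (hR : 0 < R) (hRQ : R < Q) (hw0 : 0 < w) (hw1 : w < 1)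
    (ha : a = w / (Real.pi * R ^ 2))
    (hb : b = (1 - w) / (Real.pi * (Q ^ 2 - R ^ 2)))
    (hab : a < b)
    (μ : Measure (EuclideanSpace ℝ (Fin 2)))
    (hμ : μ = volume.withDensity (fun p =>
      if ‖p‖ < R then ENNReal.ofReal a else if ‖p‖ ≤ Q then ENNReal.ofReal b else 0))
    (s : ℝ) (hs : (R + Q) / 2 ≤ s)
    (ν : ℝ → ℝ) (hν : ∀ c, ν c = (μ (ball (pc c) s)).toReal) :
    AntitoneOn ν (Icc (0:ℝ) Q) ∧ ∀ c ∈ Icc (0:ℝ) Q, ν c ≤ ν 0 := by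
  have hsp : 0 < s := by linarith
  have hQ : 0 < Q := hR.trans hRQ
  have hAB : ENNReal.ofReal a ≤ ENNReal.ofReal b := ENNReal.ofReal_le_ofReal hab.le
  have hfin : ∀ c, μ (ball (pc c) s) ≠ ⊤ := by
    intro c
    rw [hμ, withDensity_apply _ measurableSet_ball]
    refine ne_top_of_le_ne_top (b := ∫⁻ _ in ball (pc c) s, ENNReal.ofReal b) ?_
      (setLIntegral_mono' measurableSet_ball fun x _ => ?_)
    · rw [setLIntegral_const]
      exact ENNReal.mul_ne_top ENNReal.ofReal_ne_top measure_ball_lt_top.ne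
    · split_ifs <;> simp [hAB]
  have hanti : AntitoneOn ν (Icc (0:ℝ) Q) := by
    intro c hc d _ hcd
    rw [hν, hν]
    refine ENNReal.toReal_mono (hfin c) ?_
    rw [hμ, measure_ball_eq hR hQ hsp, measure_ball_eq hR hQ hsp]
    exact lintegral_mono fun y =>
      slice hAB ENNReal.ofReal_ne_top hR hRQ hs hc.1 hcd y
  exact ⟨hanti, fun c hc => hanti ⟨le_rfl, hQ.le⟩ hc hc.1⟩
end
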